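/- Let μ be as in the class {μ} and M = M_μ. Then there exists A > 1 − c such that for all sufficiently large y: 0 < M(y) − y/2 < (A/2) · y / ln(y/2). -/

import Mathlib

open MeasureTheory Filter Real Set

/-- `Z(t)² = |ζ(1/2 + it)|²`, the square of Hardy's function. -/
noncomputable def Z2 (t : ℝ) : ℝ := ‖riemannZeta (1/2 + t * Complex.I)‖ ^ 2

namespace ZMS

lemma cpow_exp_integrable {a : ℂ} (ha : 0 < a.re) {c : ℝ} (hc : 0 < c) :
    IntegrableOn (fun t : ℝ => t ^ (a.re - 1) * Real.exp (-(c * t))) (Ioi 0) := by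
  have := integrableOn_rpow_mul_exp_neg_mul_rpow (s := a.re - 1) (p := 1) (b := c) (by linarith) one_pos hc
  simpa using this

/-- complex scaling of the Gamma integral -/
lemma gamma_integral_complex {a r : ℂ} (ha : 0 < a.re) (hr : 0 < r.re) :
    IntegrableOn (fun t : ℝ => (t : ℂ) ^ (a - 1) * Complex.exp (-(r * t))) (Ioi 0) ∧
    ∫ t : ℝ in Ioi 0, (t : ℂ) ^ (a - 1) * Complex.exp (-(r * t))
      = Complex.exp (-(a * Complex.log r)) * Complex.Gamma a := by
  have hnorm : ∀ (z : ℂ) (t : ℝ), 0 < t → ‖(t : ℂ) ^ (a - 1) * Complex.exp (-(z * t))‖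
      = t ^ (a.re - 1) * Real.exp (-(z.re * t)) := by
    intro z t ht
    rw [norm_mul, Complex.norm_cpow_eq_rpow_re_of_pos ht, Complex.norm_exp]
    simp
  have hmeas : ∀ z : ℂ, AEStronglyMeasurable
      (fun t : ℝ => (t : ℂ) ^ (a - 1) * Complex.exp (-(z * t))) (volume.restrict (Ioi 0)) := by
    intro z
    refine ContinuousOn.aestronglyMeasurable ?_ measurableSet_Ioi
    refine ContinuousOn.mul ?_ (by fun_prop)
    intro t ht
    exact (Complex.continuousAt_ofReal_cpow_const t _ (Or.inr (ne_of_gt ht))).continuousWithinAt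
  have hInteg : ∀ z : ℂ, 0 < z.re → IntegrableOn
      (fun t : ℝ => (t : ℂ) ^ (a - 1) * Complex.exp (-(z * t))) (Ioi 0) := by
    intro z hz
    refine Integrable.mono' (cpow_exp_integrable ha hz) (hmeas z) ?_
    refine (ae_restrict_iff' measurableSet_Ioi).2 (Eventually.of_forall fun t ht => ?_)
    exact (hnorm z t ht).le
  refine ⟨hInteg r hr, ?_⟩
  set U : Set ℂ := {z | 0 < z.re} with hU
  have hUo : IsOpen U := isOpen_lt continuous_const Complex.continuous_re
  have hUc : IsPreconnected U := (convex_halfSpace_re_gt 0).isPreconnected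
  set f : ℂ → ℂ := fun z => ∫ t : ℝ in Ioi 0, (t : ℂ) ^ (a - 1) * Complex.exp (-(z * t)) with hf
  set g : ℂ → ℂ := fun z => Complex.exp (-(a * Complex.log z)) * Complex.Gamma a with hg
  have hfd : DifferentiableOn ℂ f U := by
    intro z hz
    have hz' : 0 < z.re := hz
    have hb : IntegrableOn (fun t : ℝ => t ^ ((a+1).re - 1) * Real.exp (-(z.re/2 * t))) (Ioi 0) :=
      cpow_exp_integrable (by simp; linarith) (by linarith)
    have := hasDerivAt_integral_of_dominated_loc_of_deriv_le (μ := volume.restrict (Ioi 0))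
      (F := fun (z:ℂ) (t : ℝ) => (t : ℂ) ^ (a - 1) * Complex.exp (-(z * t)))
      (F' := fun (z:ℂ) (t : ℝ) => (t : ℂ) ^ (a - 1) * (Complex.exp (-(z * t)) * (-t)))
      (x₀ := z) (s := Metric.ball z (z.re/2))
      (bound := fun t : ℝ => t ^ ((a+1).re - 1) * Real.exp (-(z.re/2 * t)))
      (Metric.ball_mem_nhds _ (by linarith))
      (Eventually.of_forall fun z => hmeas z) (hInteg z hz')
      (by
        have := (hmeas z).mul (g := fun t : ℝ => (-t : ℂ)) (by fun_prop)
        refine this.congr (Eventually.of_forall fun t => ?_)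
        simp [mul_assoc])
      (by
        refine (ae_restrict_iff' measurableSet_Ioi).2 (Eventually.of_forall fun t ht w hw => ?_)
        have ht' : (0:ℝ) < t := ht
        rw [← mul_assoc, norm_mul, hnorm w t ht]
        have : t ^ ((a+1).re - 1) = t ^ (a.re - 1) * t := by
          rw [← Real.rpow_add_one ht'.ne']; congr 1; simp
        rw [this]
        have h1 : ‖(-t : ℂ)‖ = t := by simp [abs_of_pos ht']
        rw [h1, mul_right_comm]
        have hwre : z.re/2 ≤ w.re := by
          have := Complex.abs_re_le_norm (w - z)
          have h2 : ‖w - z‖ < z.re/2 := by simpa [dist_eq_norm] using hw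
          simp only [Complex.sub_re] at this
          have := abs_le.1 this
          linarith
        gcongr)
      hb
      (by
        refine Eventually.of_forall fun t w hw => ?_
        refine HasDerivAt.const_mul _ ?_
        refine HasDerivAt.cexp ?_
        have := ((hasDerivAt_id w).mul_const (t:ℂ)).neg
        rw [one_mul] at this
        exact this)
    exact this.2.differentiableAt.differentiableWithinAt
  have hgd : DifferentiableOn ℂ g U := by
    intro z hz
    have : z ∈ Complex.slitPlane := Or.inl hz
    refine DifferentiableAt.differentiableWithinAt ?_
    have h1 := (Complex.hasDerivAt_log this).differentiableAt
    exact ((h1.const_mul a).neg.cexp).mul_const _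
  have hreal : ∀ x : ℝ, 0 < x → f x = g x := by
    intro x hx
    simp only [hf, hg]
    rw [Complex.integral_cpow_mul_exp_neg_mul_Ioi ha hx]
    congr 1
    rw [one_div, Complex.cpow_def_of_ne_zero (by simp [hx.ne']), ← Complex.ofReal_inv, ← Complex.ofReal_log (by positivity), Real.log_inv, ← Complex.ofReal_log hx.le]
    push_cast
    congr 1
    ring
  have hfreq : ∃ᶠ z in nhdsWithin (1:ℂ) {1}ᶜ, f z = g z := by
    have ht : Tendsto (fun n : ℕ => ((1 + 1 / ((n:ℝ) + 1) : ℝ) : ℂ)) atTop (nhdsWithin (1:ℂ) {1}ᶜ) := by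
      refine tendsto_nhdsWithin_iff.2 ⟨?_, Eventually.of_forall fun n => ?_⟩
      · have := (tendsto_one_div_add_atTop_nhds_zero_nat (𝕜 := ℝ)).const_add 1
        have := (Complex.continuous_ofReal.tendsto _).comp this
        refine (this.congr (fun n => ?_)).trans ?_
        · simp
        · simp
      · have : (0:ℝ) < 1 / ((n:ℝ)+1) := by positivity
        simp only [mem_compl_iff, mem_singleton_iff]
        intro h
        have h2 : (1 + 1 / ((n:ℝ) + 1) : ℝ) = 1 := by exact_mod_cast h
        linarith
    refine ht.frequently (Eventually.frequently (Eventually.of_forall fun n => ?_))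
    exact hreal _ (by positivity)
  have heq := (hfd.analyticOnNhd hUo).eqOn_of_preconnected_of_frequently_eq (hgd.analyticOnNhd hUo) hUc
    (show (1:ℂ) ∈ U by simp [hU]) hfreq
  exact heq hr

/-- crude bound for Gamma in vertical strips -/
lemma gamma_strip_bound {c θ t : ℝ} (hc : 0 < c) (hθ : |θ| < π / 2) :
    ‖Complex.Gamma (c + t * Complex.I)‖ ≤ Real.exp (-(θ * t)) * (Real.Gamma c * (Real.cos θ) ^ (-c)) := by
  have hcos : 0 < Real.cos θ := Real.cos_pos_of_mem_Ioo ⟨(abs_lt.1 hθ).1, (abs_lt.1 hθ).2⟩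
  set a : ℂ := c + t * Complex.I with ha
  set r : ℂ := Complex.exp (θ * Complex.I) with hr
  have hre : r.re = Real.cos θ := by rw [hr, Complex.exp_ofReal_mul_I_re]
  have hare : a.re = c := by simp [ha]
  have haim : a.im = t := by simp [ha]
  have hlog : Complex.log r = θ * Complex.I := by
    rw [hr, Complex.log_exp]
    · simp; linarith [(abs_lt.1 hθ).1, Real.pi_pos]
    · simp; linarith [(abs_lt.1 hθ).2, Real.pi_pos]
  obtain ⟨hi, he⟩ := gamma_integral_complex (a := a) (r := r) (by rw [hare]; exact hc) (by rw [hre]; exact hcos)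
  rw [hlog] at he
  have h1 : ‖∫ t : ℝ in Ioi 0, (t : ℂ) ^ (a - 1) * Complex.exp (-(r * t))‖ ≤ Real.Gamma c * (Real.cos θ) ^ (-c) := by
    refine (norm_integral_le_integral_norm _).trans ?_
    have : ∫ u : ℝ in Ioi 0, ‖(u : ℂ) ^ (a - 1) * Complex.exp (-(r * u))‖ = ∫ u : ℝ in Ioi 0, u ^ (c - 1) * Real.exp (-(Real.cos θ * u)) := by
      refine setIntegral_congr_fun measurableSet_Ioi fun u hu => ?_
      beta_reduce
      rw [norm_mul, Complex.norm_cpow_eq_rpow_re_of_pos hu, Complex.norm_exp]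
      simp [hare, hre]
    rw [this, Real.integral_rpow_mul_exp_neg_mul_Ioi hc hcos, mul_comm, one_div, Real.inv_rpow hcos.le, Real.rpow_neg hcos.le]
  rw [he, norm_mul, Complex.norm_exp] at h1
  have h2 : (-(a * (θ * Complex.I))).re = θ * t := by
    simp [ha]; ring
  rw [h2] at h1
  rw [Real.exp_neg, inv_mul_eq_div, le_div_iff₀ (Real.exp_pos _), mul_comm]
  exact h1

/-- sharp bound on the half line -/
lemma gamma_half_bound (t : ℝ) :
    ‖Complex.Gamma (1/2 + t * Complex.I)‖ ≤ Real.sqrt (2 * π) * Real.exp (-(π/2 * |t|)) := by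
  have h := Complex.Gamma_mul_Gamma_one_sub (1/2 + t * Complex.I)
  have h1 : (1 - (1/2 + t * Complex.I) : ℂ) = (starRingEnd ℂ) (1/2 + t * Complex.I) := by
    apply Complex.ext <;> norm_num
  rw [h1, Complex.Gamma_conj, Complex.mul_conj] at h
  have h2 : Complex.sin (π * (1/2 + t * Complex.I)) = (Real.cosh (π * t) : ℝ) := by
    rw [show (π * (1/2 + t * Complex.I) : ℂ) = (π * t : ℂ) * Complex.I + π / 2 by ring, Complex.sin_add_pi_div_two, Complex.cos_mul_I]
    push_cast; rfl
  rw [h2] at h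
  have h3 : Complex.normSq (Complex.Gamma (1/2 + t * Complex.I)) = π / Real.cosh (π * t) := by
    exact_mod_cast h
  rw [Complex.normSq_eq_norm_sq] at h3
  have h4 : π / Real.cosh (π * t) ≤ 2 * π * Real.exp (-(π * |t|)) := by
    rw [div_le_iff₀ (Real.cosh_pos _), ← Real.cosh_abs, abs_mul, abs_of_pos Real.pi_pos, Real.cosh_eq]
    have : Real.exp (-(π * |t|)) * Real.exp (π * |t|) = 1 := by rw [← Real.exp_add]; simp
    have h5 : 0 < Real.exp (-(π * |t|)) * Real.exp (-(π * |t|)) := by positivity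
    nlinarith [Real.pi_pos]
  refine le_of_sq_le_sq ?_ (by positivity)
  rw [h3, mul_pow, Real.sq_sqrt (by positivity), ← Real.exp_nat_mul]
  refine h4.trans (le_of_eq ?_)
  congr 2; push_cast; ring

end ZMS

namespace ZMS

lemma gamma_strip_unif {θ : ℝ} (hθ0 : 0 ≤ θ) (hθ : θ < π/2) : ∃ C : ℝ, 0 < C ∧ ∀ c ∈ Icc (1/2:ℝ) (3/2), ∀ t : ℝ,
    ‖Complex.Gamma (c + t * Complex.I)‖ ≤ C * Real.exp (-(θ * |t|)) := by
  have hcont : ContinuousOn Real.Gamma (Icc (1/2:ℝ) (3/2)) := by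
    intro x hx
    refine (Real.differentiableAt_Gamma fun m => ?_).continuousAt.continuousWithinAt
    have : (0:ℝ) ≤ m := Nat.cast_nonneg m
    linarith [hx.1]
  obtain ⟨K, hK⟩ := (isCompact_Icc.image_of_continuousOn hcont).bddAbove
  have hcos : 0 < Real.cos θ := Real.cos_pos_of_mem_Ioo ⟨by linarith [Real.pi_pos], hθ⟩
  have hKK : ∀ c ∈ Icc (1/2:ℝ) (3/2), Real.Gamma c ≤ K := fun c hc => hK (mem_image_of_mem _ hc)
  have hKpos : 0 < K := lt_of_lt_of_le (Real.Gamma_pos_of_pos (by norm_num)) (hKK 1 (by norm_num))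
  refine ⟨K * (Real.cos θ) ^ (-(3/2) : ℝ), by positivity, fun c hc t => ?_⟩
  have hc0 : 0 < c := by linarith [hc.1]
  have key : ‖Complex.Gamma (c + t * Complex.I)‖ ≤ Real.exp (-(θ * |t|)) * (Real.Gamma c * (Real.cos θ) ^ (-c)) := by
    rcases le_total 0 t with h | h
    · rw [abs_of_nonneg h]; exact gamma_strip_bound hc0 (by rw [abs_of_nonneg hθ0]; exact hθ)
    · have := gamma_strip_bound (t := t) (θ := -θ) hc0 (by rw [abs_neg, abs_of_nonneg hθ0]; exact hθ)
      rw [abs_of_nonpos h, mul_neg, ← neg_mul]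
      rwa [Real.cos_neg] at this
  refine key.trans ?_
  rw [mul_comm]
  have h1 := hKK c hc
  have h2 : (Real.cos θ) ^ (-c) ≤ (Real.cos θ) ^ (-(3/2) : ℝ) :=
    Real.rpow_le_rpow_of_exponent_ge hcos (Real.cos_le_one θ) (by linarith [hc.2])
  have h3 := (Real.Gamma_pos_of_pos hc0).le
  gcongr

lemma continuous_gamma_line {c : ℝ} (hc : 0 < c) : Continuous (fun t : ℝ => Complex.Gamma (c + t * Complex.I)) := by
  rw [continuous_iff_continuousAt]
  intro t
  have : ContinuousAt Complex.Gamma (c + t * Complex.I) := by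
    refine (Complex.differentiableAt_Gamma _ fun m h => ?_).continuousAt
    have := congrArg Complex.re h
    simp at this
    have h2 : (0:ℝ) ≤ m := Nat.cast_nonneg m
    linarith
  exact ContinuousAt.comp (f := fun t : ℝ => (c + t * Complex.I : ℂ)) this (by fun_prop)

lemma norm_exp_line (c t : ℝ) (l : ℂ) :
    ‖Complex.exp (-((c + t * Complex.I) * l))‖ = Real.exp (-(c * l.re)) * Real.exp (t * l.im) := by
  rw [Complex.norm_exp, ← Real.exp_add]
  congr 1
  simp
  ring

lemma integrable_exp_abs {b : ℝ} (hb : 0 < b) : Integrable (fun t : ℝ => Real.exp (-(b * |t|))) := by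
  rw [← integrableOn_univ, ← Iic_union_Ioi (a := (0:ℝ))]
  refine IntegrableOn.union ?_ ?_
  · refine (integrableOn_exp_mul_Iic hb 0).congr_fun (fun t ht => ?_) measurableSet_Iic
    rw [abs_of_nonpos ht]; simp
  · refine (integrableOn_exp_mul_Ioi (neg_lt_zero.2 hb) 0).congr_fun (fun t ht => ?_) measurableSet_Ioi
    rw [abs_of_pos ht]; simp

lemma integrable_pow_exp_abs (n : ℕ) {b : ℝ} (hb : 0 < b) :
    Integrable (fun t : ℝ => (1 + |t|) ^ n * Real.exp (-(b * |t|))) := by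
  have h := (integrable_exp_abs (b := b/2) (by linarith)).const_mul ((2/b)^n * (n.factorial : ℝ) * Real.exp (b/2))
  refine h.mono' (by fun_prop) (Eventually.of_forall fun t => ?_)
  have h1 := Real.pow_div_factorial_le_exp (b/2 * (1+|t|)) (by positivity) n
  rw [div_le_iff₀ (by positivity), mul_pow] at h1
  rw [Real.norm_of_nonneg (by positivity)]
  have h2 : (1+|t|)^n = (2/b)^n * ((b/2)^n * (1+|t|)^n) := by
    rw [← mul_assoc, ← mul_pow]; field_simp; simp
  have h3 : Real.exp (-(b * |t|)) = Real.exp (-(b/2 * |t|)) * Real.exp (-(b/2*|t|)) := by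
    rw [← Real.exp_add]; congr 1; ring
  have h4 : Real.exp (b/2 * (1+|t|)) * Real.exp (-(b/2*|t|)) = Real.exp (b/2) := by
    rw [← Real.exp_add]; congr 1; ring
  calc (1+|t|)^n * Real.exp (-(b * |t|)) = (2/b)^n * ((b/2)^n * (1+|t|)^n) * (Real.exp (-(b/2 * |t|)) * Real.exp (-(b/2*|t|))) := by rw [h3, ← h2]
    _ ≤ (2/b)^n * (Real.exp (b/2 * (1+|t|)) * n.factorial) * (Real.exp (-(b/2 * |t|)) * Real.exp (-(b/2*|t|))) := by gcongr
    _ = (2/b)^n * n.factorial * (Real.exp (b/2 * (1+|t|)) * Real.exp (-(b/2 * |t|))) * Real.exp (-(b/2*|t|)) := by ring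
    _ = _ := by rw [h4]

/-- Mellin inversion for the exponential, in logarithmic complex coordinate. -/
lemma gamma_mellin_inv {c : ℝ} (hc : c ∈ Icc (1/2:ℝ) (3/2)) {l : ℂ} (hl : |l.im| < π/2) :
    Integrable (fun t : ℝ => Complex.Gamma (c + t * Complex.I) * Complex.exp (-((c + t * Complex.I) * l))) ∧
    ∫ t : ℝ, Complex.Gamma (c + t * Complex.I) * Complex.exp (-((c + t * Complex.I) * l))
      = 2 * π * Complex.exp (-Complex.exp l) := by
  have hc0 : 0 < c := by linarith [hc.1]
  have hlog : Complex.log (Complex.exp l) = l :=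
    Complex.log_exp (by linarith [(abs_lt.1 hl).1, Real.pi_pos]) (by linarith [(abs_lt.1 hl).2, Real.pi_pos])
  have hre : 0 < (Complex.exp l).re := by
    rw [Complex.exp_re]
    exact mul_pos (Real.exp_pos _) (Real.cos_pos_of_mem_Ioo ⟨(abs_lt.1 hl).1, (abs_lt.1 hl).2⟩)
  have hI : Integrable (fun t : ℝ => Complex.Gamma (c + t * Complex.I) * Complex.exp (-((c + t * Complex.I) * l))) := by
    obtain ⟨θ, h1, h2⟩ := exists_between hl
    obtain ⟨C, hC, hb⟩ := gamma_strip_unif ((abs_nonneg _).trans h1.le) h2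
    have h3 := (integrable_exp_abs (b := θ - |l.im|) (by linarith)).const_mul (C * Real.exp (-(c * l.re)))
    refine h3.mono' ?_ (Eventually.of_forall fun t => ?_)
    · have := continuous_gamma_line hc0
      exact Continuous.aestronglyMeasurable (by fun_prop)
    · rw [norm_mul, norm_exp_line]
      have h4 : t * l.im ≤ |l.im| * |t| := by rw [← abs_mul, mul_comm]; exact le_abs_self _
      have h5 : Real.exp (-((θ - |l.im|) * |t|)) = Real.exp (-(θ * |t|)) * Real.exp (|l.im| * |t|) := by
        rw [← Real.exp_add]; congr 1; ring
      rw [h5]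
      calc _ ≤ (C * Real.exp (-(θ * |t|))) * (Real.exp (-(c * l.re)) * Real.exp (|l.im| * |t|)) := by
            gcongr
            exact hb c hc t
        _ = _ := by ring
  refine ⟨hI, ?_⟩
  have hmel : ∀ t : ℝ, mellin (fun u : ℝ => Complex.exp (-(Complex.exp l * u))) (c + t * Complex.I) =
      Complex.Gamma (c + t * Complex.I) * Complex.exp (-((c + t * Complex.I) * l)) := by
    intro t
    have := (gamma_integral_complex (a := c + t * Complex.I) (r := Complex.exp l) (by simpa using hc0) hre).2
    rw [hlog] at this
    rw [mellin, mul_comm (Complex.Gamma _), ← this]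
    simp only [smul_eq_mul]
  have := mellinInv_mellin_eq c (fun u : ℝ => Complex.exp (-(Complex.exp l * u))) (x := 1) one_pos
    (by
      have := (gamma_integral_complex (a := c) (r := Complex.exp l) (by simpa using hc0) hre).1
      simpa only [MellinConvergent, smul_eq_mul] using this)
    (by
      refine hI.congr (Eventually.of_forall fun t => ?_)
      exact (hmel t).symm)
    (by fun_prop)
  rw [mellinInv] at this
  simp only [Complex.ofReal_one, Complex.one_cpow, one_smul, hmel, mul_one] at this
  rw [← this, Complex.real_smul]
  push_cast
  have : (π:ℂ) ≠ 0 := by exact_mod_cast Real.pi_ne_zero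
  rw [← mul_assoc, mul_one_div_cancel (by simpa using this), one_mul]

end ZMS

namespace ZMS

noncomputable def fr (x : ℝ) : ℂ := indicator (Ioi 1) (fun x : ℝ => ((x - ⌊x⌋₊ : ℝ) : ℂ)) x

lemma norm_fr_le (x : ℝ) : ‖fr x‖ ≤ indicator (Ioi 1) (fun _ : ℝ => (1:ℝ)) x := by
  unfold fr
  by_cases hx : x ∈ Ioi (1:ℝ)
  · rw [indicator_of_mem hx, indicator_of_mem hx]
    have h1 := Nat.floor_le (show 0 ≤ x by linarith [mem_Ioi.1 hx])
    have h2 := Nat.lt_floor_add_one x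
    rw [Complex.norm_real, Real.norm_of_nonneg (by linarith)]
    linarith
  · simp [indicator_of_notMem hx]

lemma measurable_fr : Measurable fr := by
  unfold fr
  refine Measurable.indicator ?_ measurableSet_Ioi
  refine Complex.measurable_ofReal.comp ?_
  refine measurable_id.sub ?_
  exact (measurable_from_top (f := fun n : ℕ => (n:ℝ))).comp Nat.measurable_floor

lemma mellin_fr_diff {s : ℂ} (hs : s.re < 0) : DifferentiableAt ℂ (mellin fr) s := by
  refine mellin_differentiableAt_of_isBigO_rpow (a := 0) (b := s.re - 1) ?_ ?_ hs ?_ (by linarith)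
  · refine LocallyIntegrable.locallyIntegrableOn ?_ _
    refine LocallyIntegrable.mono (f := fun _ : ℝ => (1:ℝ)) (locallyIntegrable_const _) measurable_fr.aestronglyMeasurable ?_
    refine Eventually.of_forall fun x => (norm_fr_le x).trans ?_
    simp only [norm_one]
    exact indicator_le_self' (by simp) x
  · refine Asymptotics.IsBigO.of_bound 1 (Eventually.of_forall fun x => ?_)
    simp only [neg_zero, Real.rpow_zero, norm_one, mul_one]
    exact (norm_fr_le x).trans (indicator_le_self' (by simp) x)
  · have : fr =ᶠ[nhdsWithin 0 (Ioi 0)] 0 := by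
      have : Iio (1:ℝ) ∈ nhdsWithin (0:ℝ) (Ioi 0) := mem_nhdsWithin_of_mem_nhds (Iio_mem_nhds one_pos)
      filter_upwards [this] with x hx
      have hx' : x < 1 := hx
      simp [fr, hx'.le]
    exact this.trans_isBigO (Asymptotics.isBigO_zero _ _)

lemma mellin_fr_eq (s : ℂ) : mellin fr (-s) = ∫ t in Ioi (1:ℝ), ((t - ⌊t⌋₊ : ℝ) : ℂ) * (t:ℂ) ^ (-(s+1)) := by
  rw [mellin]
  have : ∀ t : ℝ, (t:ℂ) ^ (-s - 1) • fr t = indicator (Ioi 1) (fun t : ℝ => ((t - ⌊t⌋₊ : ℝ) : ℂ) * (t:ℂ) ^ (-(s+1))) t := by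
    intro t
    unfold fr
    by_cases ht : t ∈ Ioi (1:ℝ)
    · rw [indicator_of_mem ht, indicator_of_mem ht, smul_eq_mul, mul_comm]; congr 2; ring
    · rw [indicator_of_notMem ht, indicator_of_notMem ht, smul_zero]
  simp_rw [this]
  rw [setIntegral_indicator measurableSet_Ioi]
  congr 2
  ext x; simp

lemma norm_mellin_fr_le {s : ℂ} (hs : 0 < s.re) : ‖mellin fr (-s)‖ ≤ 1 / s.re := by
  rw [mellin_fr_eq]
  have hInteg : IntegrableOn (fun t : ℝ => t ^ (-(s.re + 1))) (Ioi 1) := integrableOn_Ioi_rpow_of_lt (by linarith) one_pos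
  have hv : ∫ t in Ioi (1:ℝ), t ^ (-(s.re+1)) = 1 / s.re := by
    rw [integral_Ioi_rpow_of_lt (by linarith) one_pos]
    simp
  rw [← hv]
  refine norm_integral_le_of_norm_le hInteg ?_
  refine (ae_restrict_iff' measurableSet_Ioi).2 (Eventually.of_forall fun t ht => ?_)
  have ht' : (1:ℝ) < t := ht
  have h1 := Nat.floor_le (show 0 ≤ t by linarith)
  have h2 := Nat.lt_floor_add_one t
  rw [norm_mul, Complex.norm_real, Real.norm_of_nonneg (by linarith), Complex.norm_cpow_eq_rpow_re_of_pos (by linarith)]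
  have h3 : (-(s+1)).re = -(s.re+1) := by simp
  rw [h3]
  have h4 : 0 ≤ t ^ (-(s.re+1)) := by positivity
  nlinarith

lemma zeta0_eq_of_one_lt {s : ℂ} (hs : 1 < s.re) : riemannZeta₀ s = 1 - s * mellin fr (-s) := by
  have hs1 : s ≠ 1 := by rintro rfl; simp at hs
  have hz := riemannZeta_eq_inv_sub_add hs1
  have hL : riemannZeta s = s * ∫ t in Ioi (1:ℝ), (⌊t⌋₊ : ℂ) * (t:ℂ) ^ (-(s+1)) := by
    rw [← LSeries_one_eq_riemannZeta hs]
    rw [LSeries_eq_mul_integral 1 (r := 1) zero_le_one hs ((LSeriesSummable_one_iff).2 hs)]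
    · simp
    · refine Asymptotics.IsBigO.of_bound 1 (Eventually.of_forall fun n => ?_)
      simp
  have hI1 : IntegrableOn (fun t : ℝ => (t:ℂ) ^ (-s)) (Ioi 1) := integrableOn_Ioi_cpow_of_lt (by simpa using by linarith) one_pos
  have hv1 : ∫ t in Ioi (1:ℝ), (t:ℂ) ^ (-s) = 1 / (s - 1) := by
    rw [integral_Ioi_cpow_of_lt (by simpa using by linarith) one_pos]
    simp
    rw [← neg_div_neg_eq]; congr 1 <;> ring
  have hsplit : ∀ t ∈ Ioi (1:ℝ), ((t - ⌊t⌋₊ : ℝ) : ℂ) * (t:ℂ) ^ (-(s+1)) = (t:ℂ)^(-s) - (⌊t⌋₊ : ℂ) * (t:ℂ) ^ (-(s+1)) := by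
    intro t ht
    have ht0 : (t:ℂ) ≠ 0 := by
      have : (1:ℝ) < t := ht
      exact_mod_cast (by linarith : t ≠ 0)
    have : (t:ℂ)^(-s) = t * (t:ℂ)^(-(s+1)) := by
      rw [show -s = 1 + (-(s+1)) by ring, Complex.cpow_add _ _ ht0, Complex.cpow_one]
    rw [this]; push_cast; ring
  have hI2 : IntegrableOn (fun t : ℝ => (⌊t⌋₊ : ℂ) * (t:ℂ) ^ (-(s+1))) (Ioi 1) := by
    refine Integrable.mono hI1 ?_ ?_
    · refine AEStronglyMeasurable.mul ?_ ?_
      · exact ((measurable_from_top (f := fun n : ℕ => (n:ℂ))).comp Nat.measurable_floor).aestronglyMeasurable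
      · refine ContinuousOn.aestronglyMeasurable ?_ measurableSet_Ioi
        intro t ht
        have : (1:ℝ) < t := ht
        exact (Complex.continuousAt_ofReal_cpow_const t _ (Or.inr (by linarith))).continuousWithinAt
    · refine (ae_restrict_iff' measurableSet_Ioi).2 (Eventually.of_forall fun t ht => ?_)
      have ht' : (1:ℝ) < t := ht
      have h1 := Nat.floor_le (show 0 ≤ t by linarith)
      rw [norm_mul, Complex.norm_natCast, Complex.norm_cpow_eq_rpow_re_of_pos (by linarith), Complex.norm_cpow_eq_rpow_re_of_pos (by linarith)]
      have : t ^ ((-s).re) = t * t ^ ((-(s+1)).re) := by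
        rw [← Real.rpow_one_add' (by linarith)]
        · congr 1; simp
        · simp; linarith
      rw [this]; gcongr
  rw [mellin_fr_eq, setIntegral_congr_fun measurableSet_Ioi hsplit, integral_sub hI1 hI2, hv1, mul_sub, ← hL, hz]
  have : s - 1 ≠ 0 := sub_ne_zero.2 hs1
  field_simp
  ring

lemma zeta0_eq {s : ℂ} (hs : 0 < s.re) : riemannZeta₀ s = 1 - s * mellin fr (-s) := by
  set U : Set ℂ := {z | 0 < z.re} with hU
  have hUo : IsOpen U := isOpen_lt continuous_const Complex.continuous_re
  have hUc : IsPreconnected U := (convex_halfSpace_re_gt 0).isPreconnected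
  have h1 : AnalyticOnNhd ℂ riemannZeta₀ U := differentiable_riemannZeta₀.differentiableOn.analyticOnNhd hUo
  have h2 : AnalyticOnNhd ℂ (fun s => 1 - s * mellin fr (-s)) U := by
    refine DifferentiableOn.analyticOnNhd ?_ hUo
    intro z hz
    have hz' : 0 < z.re := hz
    refine DifferentiableAt.differentiableWithinAt ?_
    have := (mellin_fr_diff (s := -z) (by simpa using hz')).comp z (differentiable_neg.differentiableAt (x := z))
    exact (differentiableAt_const _).sub (differentiableAt_id.mul this)
  refine h1.eqOn_of_preconnected_of_eventuallyEq h2 hUc (z₀ := 2) (by simp [hU]) ?_ hs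
  have : {z : ℂ | 1 < z.re} ∈ nhds (2:ℂ) := (isOpen_lt continuous_const Complex.continuous_re).mem_nhds (by simp)
  filter_upwards [this] with z hz using zeta0_eq_of_one_lt hz

lemma norm_zeta0_le {s : ℂ} (hs : 1/2 ≤ s.re) : ‖riemannZeta₀ s‖ ≤ 1 + 2 * ‖s‖ := by
  have h0 : 0 < s.re := by linarith
  rw [zeta0_eq h0]
  have h1 := norm_mellin_fr_le h0
  have h2 : 1 / s.re ≤ 2 := by rw [div_le_iff₀ h0]; linarith
  calc ‖1 - s * mellin fr (-s)‖ ≤ ‖(1:ℂ)‖ + ‖s * mellin fr (-s)‖ := norm_sub_le _ _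
    _ ≤ 1 + ‖s‖ * 2 := by rw [norm_one, norm_mul]; gcongr; linarith
    _ = _ := by ring

end ZMS

namespace ZMS

lemma pow_exp_le (n : ℕ) {b : ℝ} (hb : 0 < b) : ∃ K : ℝ, 0 < K ∧ ∀ t : ℝ,
    (1 + |t|) ^ n * Real.exp (-(b * |t|)) ≤ K * Real.exp (-(b/2 * |t|)) := by
  refine ⟨(2/b)^n * (n.factorial : ℝ) * Real.exp (b/2), by positivity, fun t => ?_⟩
  have h1 := Real.pow_div_factorial_le_exp (b/2 * (1+|t|)) (by positivity) n
  rw [div_le_iff₀ (by positivity), mul_pow] at h1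
  have h2 : (1+|t|)^n = (2/b)^n * ((b/2)^n * (1+|t|)^n) := by
    rw [← mul_assoc, ← mul_pow]; field_simp; simp
  have h3 : Real.exp (-(b * |t|)) = Real.exp (-(b/2 * |t|)) * Real.exp (-(b/2*|t|)) := by
    rw [← Real.exp_add]; congr 1; ring
  have h4 : Real.exp (b/2 * (1+|t|)) * Real.exp (-(b/2*|t|)) = Real.exp (b/2) := by
    rw [← Real.exp_add]; congr 1; ring
  calc (1+|t|)^n * Real.exp (-(b * |t|)) = (2/b)^n * ((b/2)^n * (1+|t|)^n) * (Real.exp (-(b/2 * |t|)) * Real.exp (-(b/2*|t|))) := by rw [h3, ← h2]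
    _ ≤ (2/b)^n * (Real.exp (b/2 * (1+|t|)) * n.factorial) * (Real.exp (-(b/2 * |t|)) * Real.exp (-(b/2*|t|))) := by gcongr
    _ = (2/b)^n * n.factorial * (Real.exp (b/2 * (1+|t|)) * Real.exp (-(b/2 * |t|))) * Real.exp (-(b/2*|t|)) := by ring
    _ = _ := by rw [h4]

/-- contour shift -/
lemma shift_line (f : ℂ → ℂ) (hf : ∀ s : ℂ, 0 < s.re → DifferentiableAt ℂ f s) {C b : ℝ} (hb : 0 < b)
    (hbd : ∀ c ∈ Icc (1/2:ℝ) (3/2), ∀ t : ℝ, 1 ≤ |t| → ‖f (c + t * Complex.I)‖ ≤ C * Real.exp (-(b * |t|)))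
    (h1 : Integrable (fun t : ℝ => f ((1/2:ℝ) + t * Complex.I)))
    (h2 : Integrable (fun t : ℝ => f ((3/2:ℝ) + t * Complex.I))) :
    ∫ t : ℝ, f ((3/2:ℝ) + t * Complex.I) = ∫ t : ℝ, f ((1/2:ℝ) + t * Complex.I) := by
  have hrect : ∀ R : ℝ, (∫ x : ℝ in (1/2:ℝ)..(3/2), f (x + (-R : ℝ) * Complex.I)) - (∫ x : ℝ in (1/2:ℝ)..(3/2), f (x + R * Complex.I))
      + Complex.I * (∫ y : ℝ in (-R)..R, f ((3/2:ℝ) + y * Complex.I)) - Complex.I * ∫ y : ℝ in (-R)..R, f ((1/2:ℝ) + y * Complex.I) = 0 := by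
    intro R
    have := Complex.integral_boundary_rect_eq_zero_of_differentiableOn f (⟨1/2, -R⟩ : ℂ) (⟨3/2, R⟩ : ℂ) ?_
    · simpa using! this
    · intro s hs
      refine (hf s ?_).differentiableWithinAt
      have := (Complex.mem_reProdIm.1 hs).1
      rw [uIcc_of_le (by norm_num)] at this
      have := this.1
      simp at this; linarith
  have hv : ∀ c : ℝ, Integrable (fun t : ℝ => f (c + t * Complex.I)) →
      Tendsto (fun R : ℝ => ∫ y : ℝ in (-R)..R, f (c + y * Complex.I)) atTop (nhds (∫ t : ℝ, f (c + t * Complex.I))) := by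
    intro c hc
    exact intervalIntegral_tendsto_integral hc tendsto_neg_atTop_atBot tendsto_id
  have hdec : Tendsto (fun R : ℝ => C * Real.exp (-(b * R))) atTop (nhds 0) := by
    have : Tendsto (fun R : ℝ => Real.exp (-(b * R))) atTop (nhds 0) :=
      Real.tendsto_exp_neg_atTop_nhds_zero.comp (tendsto_id.const_mul_atTop hb)
    simpa using this.const_mul C
  have hhor : ∀ e : ℝ, |e| = 1 → Tendsto (fun R : ℝ => ∫ x : ℝ in (1/2:ℝ)..(3/2), f (x + (e * R : ℝ) * Complex.I)) atTop (nhds 0) := by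
    intro e he
    refine squeeze_zero_norm' ?_ hdec
    filter_upwards [eventually_ge_atTop 1] with R hR
    have habs : |e * R| = R := by rw [abs_mul, he, one_mul, abs_of_nonneg (by linarith)]
    have := intervalIntegral.norm_integral_le_of_norm_le_const (a := (1/2:ℝ)) (b := 3/2) (C := C * Real.exp (-(b * R)))
      (f := fun x : ℝ => f (x + (e * R : ℝ) * Complex.I)) (by
        intro x hx
        rw [uIoc_of_le (by norm_num)] at hx
        have := hbd x ⟨hx.1.le, hx.2⟩ (e * R) (by rw [habs]; exact hR)
        rwa [habs] at this)
    refine this.trans (le_of_eq ?_)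
    norm_num
  have hlim := (((hhor (-1) (by simp)).sub (hhor 1 (by simp))).add ((hv _ h2).const_mul Complex.I)).sub ((hv _ h1).const_mul Complex.I)
  have hz : Tendsto (fun _ : ℝ => (0:ℂ)) atTop (nhds 0) := tendsto_const_nhds
  have := tendsto_nhds_unique (hlim.congr (fun R => by
    have := hrect R
    simpa only [neg_one_mul, one_mul] using this)) hz
  rw [sub_self, zero_add, ← mul_sub] at this
  have := (mul_eq_zero.1 this).resolve_left Complex.I_ne_zero
  exact sub_eq_zero.1 this

noncomputable def Ef (l s : ℂ) : ℂ := Complex.Gamma s * Complex.exp (-(s * l))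

lemma Ef_bound {l : ℂ} (hl : |l.im| < π/2) : ∃ C b : ℝ, 0 < C ∧ 0 < b ∧ ∀ c ∈ Icc (1/2:ℝ) (3/2), ∀ t : ℝ,
    ‖Ef l (c + t * Complex.I)‖ ≤ C * Real.exp (-(b * |t|)) := by
  obtain ⟨θ, h1, h2⟩ := exists_between hl
  obtain ⟨C, hC, hb⟩ := gamma_strip_unif ((abs_nonneg _).trans h1.le) h2
  refine ⟨C * Real.exp (3/2 * |l.re|), θ - |l.im|, by positivity, by linarith, fun c hc t => ?_⟩
  rw [Ef, norm_mul, norm_exp_line]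
  have h4 : t * l.im ≤ |l.im| * |t| := by rw [← abs_mul, mul_comm]; exact le_abs_self _
  have h6 : -(c * l.re) ≤ 3/2 * |l.re| := by
    have := neg_abs_le l.re
    have h0 := abs_nonneg l.re
    nlinarith [hc.1, hc.2]
  have h5 : Real.exp (-((θ - |l.im|) * |t|)) = Real.exp (-(θ * |t|)) * Real.exp (|l.im| * |t|) := by
    rw [← Real.exp_add]; congr 1; ring
  rw [h5]
  calc _ ≤ (C * Real.exp (-(θ * |t|))) * (Real.exp (3/2 * |l.re|) * Real.exp (|l.im| * |t|)) := by
        gcongr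
        exact hb c hc t
    _ = _ := by ring

lemma norm_line_le {c : ℝ} (hc : c ∈ Icc (1/2:ℝ) (3/2)) (t : ℝ) : ‖(c + t * Complex.I : ℂ)‖ ≤ 2 * (1 + |t|) := by
  refine (norm_add_le _ _).trans ?_
  rw [norm_mul, Complex.norm_I, Complex.norm_real, Complex.norm_real, Real.norm_eq_abs, Real.norm_eq_abs, abs_of_pos (by linarith [hc.1])]
  have := abs_nonneg t
  linarith [hc.2]

lemma norm_zeta0_line {c : ℝ} (hc : c ∈ Icc (1/2:ℝ) (3/2)) (t : ℝ) : ‖riemannZeta₀ (c + t * Complex.I)‖ ≤ 5 * (1 + |t|) := by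
  have h1 := norm_zeta0_le (s := c + t * Complex.I) (by simpa using hc.1)
  have h2 := norm_line_le hc t
  have := abs_nonneg t
  linarith

noncomputable def hfun (s : ℂ) : ℂ := 2 * dslope riemannZeta₀ 1 s + riemannZeta₀ s ^ 2

lemma hfun_diff : Differentiable ℂ hfun := by
  have h : Differentiable ℂ (dslope riemannZeta₀ 1) := by
    rw [← differentiableOn_univ]
    exact (Complex.differentiableOn_dslope univ_mem).2 differentiable_riemannZeta₀.differentiableOn
  unfold hfun
  exact (h.const_mul 2).add (differentiable_riemannZeta₀.pow 2)

lemma zeta_sq_eq {s : ℂ} (hs : s ≠ 1) : riemannZeta s ^ 2 = hfun s + ((s-1)⁻¹ ^ 2 + 2 * Real.eulerMascheroniConstant * (s-1)⁻¹) := by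
  rw [hfun, dslope_of_ne _ hs, slope_def_field, riemannZeta₀_one, riemannZeta_eq_inv_sub_add hs]
  field_simp
  ring

lemma hfun_bound {c : ℝ} (hc : c ∈ Icc (1/2:ℝ) (3/2)) (t : ℝ) (ht : 1/2 ≤ ‖(c + t * Complex.I - 1 : ℂ)‖) :
    ‖hfun (c + t * Complex.I)‖ ≤ 49 * (1 + |t|) ^ 2 := by
  have hne : (c + t * Complex.I : ℂ) ≠ 1 := by
    intro h; rw [h] at ht; norm_num at ht
  have h0 := norm_zeta0_line hc t
  have h1 : ‖dslope riemannZeta₀ 1 (c + t * Complex.I)‖ ≤ 12 * (1+|t|) := by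
    rw [dslope_of_ne _ hne, slope_def_field, riemannZeta₀_one, norm_div, div_le_iff₀ (by linarith)]
    have hg : ‖(Real.eulerMascheroniConstant : ℂ)‖ ≤ 1 := by
      rw [Complex.norm_real, Real.norm_eq_abs, abs_le]
      have := Real.eulerMascheroniConstant_lt_two_thirds
      have := Real.one_half_lt_eulerMascheroniConstant
      constructor <;> linarith
    have := norm_sub_le (riemannZeta₀ (c + t * Complex.I)) Real.eulerMascheroniConstant
    have := abs_nonneg t
    nlinarith
  have h2 : ‖riemannZeta₀ (c + t * Complex.I) ^ 2‖ ≤ (5 * (1+|t|))^2 := by rw [norm_pow]; gcongr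
  rw [hfun]
  refine (norm_add_le _ _).trans ?_
  rw [norm_mul]
  have := abs_nonneg t
  norm_num
  norm_num at h2
  nlinarith

end ZMS

namespace ZMS

lemma integral_exp_abs {b : ℝ} (hb : 0 < b) : ∫ t : ℝ, Real.exp (-(b * |t|)) = 2 / b := by
  have h := integral_comp_abs (f := fun t => Real.exp (-(b * t)))
  rw [h]
  have := integral_exp_mul_Ioi (a := -b) (by linarith) 0
  simp only [neg_mul] at this
  rw [this]; simp; ring

lemma int_bound {σ : ℝ} (hσ : 0 < σ) (g : ℝ → ℂ) {K : ℝ} (hK : 0 ≤ K)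
    (hg : ∀ t, ‖g t‖ ≤ K * (Real.exp (-(σ * |t|)) * (√(1+t^2))⁻¹)) : ‖∫ t, g t‖ ≤ K * (3 * (√σ)⁻¹) := by
  have hs : 0 < √σ := Real.sqrt_pos.2 hσ
  have hi : Integrable (fun t : ℝ => K * (1/2 * (√σ * Real.exp (-(σ * |t|)) + (√σ)⁻¹ * (1+t^2)⁻¹))) :=
    ((((integrable_exp_abs hσ).const_mul _).add (integrable_inv_one_add_sq.const_mul _)).const_mul _).const_mul _
  refine (norm_integral_le_of_norm_le hi (ae_of_all _ fun t => ?_)).trans ?_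
  · refine (hg t).trans (mul_le_mul_of_nonneg_left ?_ hK)
    have ht : 0 < 1 + t^2 := by positivity
    have hq : (√(1+t^2))⁻¹ ^ 2 = (1+t^2)⁻¹ := by rw [inv_pow, Real.sq_sqrt ht.le]
    rw [← hq]
    set e := Real.exp (-(σ * |t|)) with he
    have he1 : e ≤ 1 := by rw [he, Real.exp_le_one_iff]; have := abs_nonneg t; nlinarith
    have he0 : 0 < e := Real.exp_pos _
    set r := (√(1+t^2))⁻¹
    have hr : 0 ≤ r := by positivity
    have h1 : e * r * √σ ≤ 1/2 * (√σ * e + (√σ)⁻¹ * r^2) * √σ := by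
      have : (√σ)⁻¹ * r^2 * √σ = r^2 := by field_simp
      have h3 : 1/2 * (√σ * e + (√σ)⁻¹ * r^2) * √σ = 1/2 * (√σ ^2 * e + (√σ)⁻¹ * r^2 * √σ) := by ring
      rw [h3, this]
      have h4 : √σ^2 * e^2 ≤ √σ^2 * e := by
        have : e^2 ≤ e := by nlinarith
        gcongr
      nlinarith [sq_nonneg (√σ * e - r)]
    exact le_of_mul_le_mul_right h1 hs
  · rw [integral_const_mul, integral_const_mul, integral_add ((integrable_exp_abs hσ).const_mul _) (integrable_inv_one_add_sq.const_mul _),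
      integral_const_mul, integral_const_mul, integral_exp_abs hσ, integral_univ_inv_one_add_sq]
    have : √σ * (2/σ) = 2 * (√σ)⁻¹ := by
      have := Real.mul_self_sqrt hσ.le
      field_simp
      nlinarith
    rw [this]
    have hp := Real.pi_lt_four
    have : 0 < (√σ)⁻¹ := by positivity
    refine mul_le_mul_of_nonneg_left ?_ hK
    nlinarith

lemma continuous_Ef_line (l : ℂ) {c : ℝ} (hc : 0 < c) : Continuous (fun t : ℝ => Ef l (c + t * Complex.I)) := by
  unfold Ef
  exact (continuous_gamma_line hc).mul (by fun_prop)

lemma integrable_Ef_mul {l : ℂ} (hl : |l.im| < π/2) {c : ℝ} (hc : c ∈ Icc (1/2:ℝ) (3/2)) {φ : ℝ → ℂ}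
    (hφ : Continuous φ) {K : ℝ} (hK : ∀ t, ‖φ t‖ ≤ K * (1+|t|)^2) :
    Integrable (fun t : ℝ => Ef l (c + t * Complex.I) * φ t) := by
  obtain ⟨C, b, hC, hb, h⟩ := Ef_bound hl
  refine Integrable.mono' ((integrable_pow_exp_abs 2 hb).const_mul (C * K)) ?_ (ae_of_all _ fun t => ?_)
  · exact ((continuous_Ef_line l (by linarith [hc.1])).mul hφ).aestronglyMeasurable
  · rw [norm_mul]
    calc _ ≤ (C * Real.exp (-(b * |t|))) * (K * (1+|t|)^2) := by
          gcongr
          · exact h c hc t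
          · exact hK t
      _ = _ := by ring

lemma Ef_half_bound {l : ℂ} {σ : ℝ} (hre : 0 ≤ l.re) (him : l.im = π/2 - σ) (hσ : 0 < σ) (hσ1 : σ ≤ 1) (t : ℝ) :
    ‖Ef l ((1/2:ℝ) + t * Complex.I)‖ ≤ 3 * Real.exp (-(σ * |t|)) := by
  rw [Ef, norm_mul, norm_exp_line]
  have h1 := gamma_half_bound t
  have h2 : √(2*π) ≤ 3 := by
    rw [Real.sqrt_le_iff]; constructor; norm_num
    linarith [Real.pi_lt_d2]
  have h3 : Real.exp (-(1/2 * l.re)) ≤ 1 := by rw [Real.exp_le_one_iff]; linarith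
  have h4 : Real.exp (t * l.im) ≤ Real.exp ((π/2 - σ) * |t|) := by
    rw [him, mul_comm]
    have := le_abs_self t
    have : 0 ≤ π/2 - σ := by linarith [Real.pi_gt_three]
    gcongr
  have h5 : Real.exp (-(σ * |t|)) = Real.exp (-(π/2*|t|)) * Real.exp ((π/2 - σ) * |t|) := by
    rw [← Real.exp_add]; congr 1; ring
  rw [h5]
  have h1' : ‖Complex.Gamma ((1/2:ℝ) + t * Complex.I)‖ ≤ √(2*π) * Real.exp (-(π/2*|t|)) := by
    convert! h1 using 3; push_cast; ring
  calc _ ≤ (3 * Real.exp (-(π/2*|t|))) * (1 * Real.exp ((π/2 - σ) * |t|)) := by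
        gcongr
        exact h1'.trans (by gcongr)
    _ = _ := by ring

/-- pole part -/
noncomputable def Pp (s : ℂ) : ℂ := (s-1)⁻¹ ^ 2 + 2 * Real.eulerMascheroniConstant * (s-1)⁻¹

lemma norm_half_inv (e t : ℝ) (he : |e| = 1/2) : ‖(e + t * Complex.I : ℂ)⁻¹‖ ≤ 2 * (√(1+t^2))⁻¹ ∧ ‖(e + t * Complex.I : ℂ)⁻¹‖ ≤ 2
    ∧ (e + t * Complex.I : ℂ) ≠ 0 := by
  have h : ‖(e + t * Complex.I : ℂ)‖ = √(1/4 + t^2) := by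
    rw [Complex.norm_add_mul_I, ← sq_abs e, he]; norm_num
  have hpos : 0 < √(1/4 + t^2) := Real.sqrt_pos.2 (by positivity)
  have h2 : √(1+t^2) ≤ 2 * √(1/4+t^2) := by
    rw [Real.sqrt_le_iff]; refine ⟨by positivity, ?_⟩
    rw [mul_pow, Real.sq_sqrt (by positivity)]; nlinarith [sq_nonneg t]
  have h3 : 1 ≤ √(1+t^2) := by rw [Real.one_le_sqrt]; nlinarith [sq_nonneg t]
  have h4 : ‖(e + t * Complex.I : ℂ)⁻¹‖ ≤ 2 * (√(1+t^2))⁻¹ := by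
    rw [norm_inv, h, ← div_eq_mul_inv, inv_eq_one_div, div_le_div_iff₀ hpos (by positivity)]
    linarith
  refine ⟨h4, h4.trans ?_, ?_⟩
  · have := inv_le_one_of_one_le₀ h3
    linarith
  · rw [← norm_pos_iff, h]; exact hpos

lemma gamma_norm_le : ‖(Real.eulerMascheroniConstant : ℂ)‖ ≤ 1 := by
  rw [Complex.norm_real, Real.norm_eq_abs, abs_le]
  have := Real.eulerMascheroniConstant_lt_two_thirds
  have := Real.one_half_lt_eulerMascheroniConstant
  constructor <;> linarith

lemma Pp_line {c e : ℝ} (hce : c - 1 = e) (he : |e| = 1/2) (t : ℝ) :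
    ‖Pp (c + t * Complex.I)‖ ≤ 8 * (√(1+t^2))⁻¹ ∧ ‖Pp (c + t * Complex.I)‖ ≤ 8 * (1+|t|)^2 ∧ (c + t * Complex.I : ℂ) ≠ 1 := by
  have hs : (c + t * Complex.I : ℂ) - 1 = e + t * Complex.I := by rw [← hce]; push_cast; ring
  obtain ⟨h1, h2, h3⟩ := norm_half_inv e t he
  have hP : ‖Pp (c + t * Complex.I)‖ ≤ 4 * ‖(e + t * Complex.I : ℂ)⁻¹‖ := by
    rw [Pp, hs]
    refine (norm_add_le _ _).trans ?_
    rw [norm_mul, norm_mul, norm_pow]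
    have := gamma_norm_le
    have h0 := norm_nonneg (e + t * Complex.I : ℂ)⁻¹
    rw [Complex.norm_two]
    nlinarith
  refine ⟨by linarith, ?_, ?_⟩
  · have := abs_nonneg t
    nlinarith
  · intro h; rw [h, sub_self] at hs; exact h3 hs.symm

lemma Pp_cont {c e : ℝ} (hce : c - 1 = e) (he : |e| = 1/2) : Continuous (fun t : ℝ => Pp (c + t * Complex.I)) := by
  unfold Pp
  have : Continuous (fun t : ℝ => ((c + t * Complex.I : ℂ) - 1)⁻¹) := by
    refine Continuous.inv₀ (by fun_prop) fun t => ?_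
    rw [sub_ne_zero]; exact (Pp_line hce he t).2.2
  exact (this.pow 2).add (continuous_const.mul this)

lemma zeta_line_int {l : ℂ} (hl : |l.im| < π/2) {c e : ℝ} (hc : c ∈ Icc (1/2:ℝ) (3/2)) (hce : c - 1 = e) (he : |e| = 1/2) :
    Integrable (fun t : ℝ => Ef l (c + t * Complex.I) * hfun (c + t * Complex.I)) ∧
    Integrable (fun t : ℝ => Ef l (c + t * Complex.I) * Pp (c + t * Complex.I)) ∧
    Integrable (fun t : ℝ => Ef l (c + t * Complex.I) * riemannZeta (c + t * Complex.I) ^ 2) ∧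
    ∫ t : ℝ, Ef l (c + t * Complex.I) * riemannZeta (c + t * Complex.I) ^ 2 =
     (∫ t : ℝ, Ef l (c + t * Complex.I) * hfun (c + t * Complex.I)) + ∫ t : ℝ, Ef l (c + t * Complex.I) * Pp (c + t * Complex.I) := by
  have hhalf : ∀ t : ℝ, 1/2 ≤ ‖(c + t * Complex.I - 1 : ℂ)‖ := by
    intro t
    have := Complex.abs_re_le_norm (c + t * Complex.I - 1 : ℂ)
    simp [hce, he] at this
    simpa using this
  have h1 : Integrable (fun t : ℝ => Ef l (c + t * Complex.I) * hfun (c + t * Complex.I)) :=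
    integrable_Ef_mul hl hc (hfun_diff.continuous.comp (by fun_prop)) (fun t => hfun_bound hc t (hhalf t))
  have h2 : Integrable (fun t : ℝ => Ef l (c + t * Complex.I) * Pp (c + t * Complex.I)) :=
    integrable_Ef_mul hl hc (Pp_cont hce he) (fun t => (Pp_line hce he t).2.1)
  have h3 : (fun t : ℝ => Ef l (c + t * Complex.I) * riemannZeta (c + t * Complex.I) ^ 2) =
     fun t : ℝ => Ef l (c + t * Complex.I) * hfun (c + t * Complex.I) + Ef l (c + t * Complex.I) * Pp (c + t * Complex.I) := by
    funext t
    rw [zeta_sq_eq (Pp_line hce he t).2.2, Pp, mul_add]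
  refine ⟨h1, h2, ?_, ?_⟩
  · rw [h3]; exact h1.add h2
  · rw [h3, integral_add h1 h2]

lemma hshift {l : ℂ} (hl : |l.im| < π/2) :
    ∫ t : ℝ, Ef l ((3/2:ℝ) + t * Complex.I) * hfun ((3/2:ℝ) + t * Complex.I) =
    ∫ t : ℝ, Ef l ((1/2:ℝ) + t * Complex.I) * hfun ((1/2:ℝ) + t * Complex.I) := by
  obtain ⟨C, b, hC, hb, h⟩ := Ef_bound hl
  obtain ⟨K, hK, hK2⟩ := pow_exp_le 2 hb
  refine shift_line (fun s => Ef l s * hfun s) (fun s hs => ?_) (b := b/2) (C := C * 49 * K) (by positivity) (fun c hc t ht => ?_)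
    (zeta_line_int (e := -(1/2)) hl (by norm_num) (by norm_num) (by norm_num [abs_of_pos])).1
    (zeta_line_int (e := 1/2) hl (by norm_num) (by norm_num) (by norm_num [abs_of_pos])).1
  · refine DifferentiableAt.mul ?_ (hfun_diff s)
    unfold Ef
    refine DifferentiableAt.mul (Complex.differentiableAt_Gamma _ fun m hm => ?_) (by fun_prop)
    rw [hm] at hs
    simp at hs
    have : (0:ℝ) ≤ m := Nat.cast_nonneg m
    linarith
  · have h2 : 1/2 ≤ ‖(c + t * Complex.I - 1 : ℂ)‖ := by
      have := Complex.abs_im_le_norm (c + t * Complex.I - 1 : ℂ)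
      simp at this
      linarith
    show ‖Ef l _ * hfun _‖ ≤ _
    rw [norm_mul]
    calc _ ≤ (C * Real.exp (-(b * |t|))) * (49 * (1+|t|)^2) := by
          gcongr
          · exact h c hc t
          · exact hfun_bound hc t h2
      _ = C * 49 * ((1+|t|)^2 * Real.exp (-(b*|t|))) := by ring
      _ ≤ C * 49 * (K * Real.exp (-(b/2*|t|))) := mul_le_mul_of_nonneg_left (hK2 t) (by positivity)
      _ = _ := by ring

lemma shift_zeta {l : ℂ} {σ : ℝ} (hre : 0 ≤ l.re) (him : l.im = π/2 - σ) (hσ : 0 < σ) (hσ1 : σ ≤ 1) :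
    ‖(∫ t : ℝ, Ef l ((3/2:ℝ) + t * Complex.I) * riemannZeta ((3/2:ℝ) + t * Complex.I) ^ 2) -
     ∫ t : ℝ, Ef l ((1/2:ℝ) + t * Complex.I) * riemannZeta ((1/2:ℝ) + t * Complex.I) ^ 2‖ ≤ 200 * (√σ)⁻¹ := by
  have hl : |l.im| < π/2 := by
    rw [him, abs_lt]; constructor <;> linarith [Real.pi_gt_three]
  have hcos : 0 ≤ (Complex.exp l).re := by
    rw [Complex.exp_re]
    have := (Real.cos_pos_of_mem_Ioo (x := l.im) (abs_lt.1 hl)).le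
    positivity
  have a1 := (zeta_line_int (c := 1/2) (e := -(1/2)) hl (by norm_num) (by norm_num) (by norm_num [abs_of_pos]))
  have a2 := (zeta_line_int (c := 3/2) (e := 1/2) hl (by norm_num) (by norm_num) (by norm_num [abs_of_pos]))
  rw [a1.2.2.2, a2.2.2.2, hshift hl, add_sub_add_left_eq_sub]
  have b1 : ‖∫ t : ℝ, Ef l ((1/2:ℝ) + t * Complex.I) * Pp ((1/2:ℝ) + t * Complex.I)‖ ≤ 24 * (3 * (√σ)⁻¹) := by
    refine int_bound hσ _ (by norm_num) fun t => ?_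
    rw [norm_mul]
    calc _ ≤ (3 * Real.exp (-(σ * |t|))) * (8 * (√(1+t^2))⁻¹) := by
          gcongr
          · exact Ef_half_bound hre him hσ hσ1 t
          · exact (Pp_line (c := 1/2) (e := -(1/2)) (by norm_num) (by norm_num [abs_of_pos]) t).1
      _ = _ := by ring
  have hmell := gamma_mellin_inv (c := 1/2) (by norm_num) hl
  have hEf : ∀ t : ℝ, Ef l ((3/2:ℝ) + t * Complex.I) * Pp ((3/2:ℝ) + t * Complex.I) =
     Ef l ((1/2:ℝ) + t * Complex.I) * Complex.exp (-l) * ((1/2:ℝ) + t * Complex.I : ℂ)⁻¹ +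
     Ef l ((1/2:ℝ) + t * Complex.I) * (Complex.exp (-l) * (2 * Real.eulerMascheroniConstant)) := by
    intro t
    have hne := (norm_half_inv (1/2) t (by norm_num [abs_of_pos])).2.2
    have e1 : ((3/2:ℝ) + t * Complex.I : ℂ) = ((1/2:ℝ) + t * Complex.I) + 1 := by push_cast; ring
    rw [e1]
    set w : ℂ := ((1/2:ℝ) + t * Complex.I)
    rw [Ef, Pp, Complex.Gamma_add_one _ hne, add_sub_cancel_right, Ef]
    have : -((w+1)*l) = -(w*l) + -l := by ring
    rw [this, Complex.exp_add]
    field_simp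
  have hel : ‖Complex.exp (-l)‖ ≤ 1 := by
    rw [Complex.norm_exp, Complex.neg_re, Real.exp_le_one_iff]; linarith
  have i2 : Integrable (fun t : ℝ => Ef l ((1/2:ℝ) + t * Complex.I) * (Complex.exp (-l) * (2 * Real.eulerMascheroniConstant))) := by
    exact hmell.1.mul_const _
  have i1 : Integrable (fun t : ℝ => Ef l ((1/2:ℝ) + t * Complex.I) * Complex.exp (-l) * ((1/2:ℝ) + t * Complex.I : ℂ)⁻¹) := by
    have := a2.2.1.sub i2
    refine this.congr (ae_of_all _ fun t => ?_)
    simp only [Pi.sub_apply]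
    rw [hEf t]; ring
  have b2 : ‖∫ t : ℝ, Ef l ((3/2:ℝ) + t * Complex.I) * Pp ((3/2:ℝ) + t * Complex.I)‖ ≤ 6 * (3 * (√σ)⁻¹) + 16 := by
    rw [show (fun t : ℝ => Ef l ((3/2:ℝ) + t * Complex.I) * Pp ((3/2:ℝ) + t * Complex.I)) = _ from funext hEf, integral_add i1 i2]
    refine (norm_add_le _ _).trans ?_
    gcongr
    · refine int_bound hσ _ (by norm_num) fun t => ?_
      rw [norm_mul, norm_mul]
      calc _ ≤ (3 * Real.exp (-(σ * |t|))) * 1 * (2 * (√(1+t^2))⁻¹) := by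
            gcongr
            · exact Ef_half_bound hre him hσ hσ1 t
            · exact (norm_half_inv (1/2) t (by norm_num [abs_of_pos])).1
        _ = _ := by ring
    · rw [integral_mul_const]
      have : ∫ t : ℝ, Ef l ((1/2:ℝ) + t * Complex.I) = 2 * π * Complex.exp (-Complex.exp l) := hmell.2
      rw [this]
      have h1 : ‖Complex.exp (-Complex.exp l)‖ ≤ 1 := by
        rw [Complex.norm_exp, Complex.neg_re, Real.exp_le_one_iff]; linarith
      simp only [norm_mul]
      have hg := gamma_norm_le
      rw [Complex.norm_real π, Real.norm_eq_abs, abs_of_pos Real.pi_pos]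
      norm_num
      calc 2 * π * ‖Complex.exp (-Complex.exp l)‖ * (‖Complex.exp (-l)‖ * (2 * |Real.eulerMascheroniConstant|)) ≤ 2 * 4 * 1 * (1 * (2*1)) := by
            have := Real.pi_lt_four.le
            gcongr
            simpa using hg
        _ = 16 := by norm_num
  have hs : 1 ≤ (√σ)⁻¹ := by
    rw [one_le_inv₀ (Real.sqrt_pos.2 hσ)]
    exact Real.sqrt_le_one.2 hσ1
  refine (norm_sub_le _ _).trans ?_
  linarith

end ZMS

namespace ZMS

/-- the product `(m+1)(n+1)` -/
noncomputable def pq (p : ℕ × ℕ) : ℝ := ((p.1:ℝ) + 1) * ((p.2:ℝ) + 1)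

lemma pq_pos (p : ℕ × ℕ) : 0 < pq p := by unfold pq; positivity

lemma one_le_pq (p : ℕ × ℕ) : 1 ≤ pq p := by
  unfold pq
  have h1 : (0:ℝ) ≤ p.1 := Nat.cast_nonneg _
  have h2 : (0:ℝ) ≤ p.2 := Nat.cast_nonneg _
  nlinarith

lemma summable_one : Summable (fun n : ℕ => ((n:ℝ)+1) ^ (-(3/2) : ℝ)) := by
  have h := (summable_nat_add_iff 1).2 (Real.summable_nat_rpow (p := -(3/2)).2 (by norm_num))
  exact_mod_cast h

lemma summable_pq : Summable (fun p : ℕ × ℕ => (pq p) ^ (-(3/2) : ℝ)) := by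
  have := summable_one.mul_of_nonneg summable_one (fun n => by positivity) (fun n => by positivity)
  refine this.congr fun p => ?_
  rw [pq, Real.mul_rpow (by positivity) (by positivity)]

lemma zeta_sq_tsum {s : ℂ} (hs : s.re = 3/2) :
    riemannZeta s ^ 2 = ∑' p : ℕ × ℕ, Complex.exp (-(s * (Real.log (pq p) : ℂ))) := by
  have hterm : ∀ n : ℕ, 1 / ((n:ℂ)+1) ^ s = Complex.exp (-(s * (Real.log ((n:ℝ)+1) : ℂ))) := by
    intro n
    have h0 : ((n:ℂ)+1) ≠ 0 := by exact_mod_cast Nat.succ_ne_zero n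
    rw [Complex.cpow_def_of_ne_zero h0, one_div, ← Complex.exp_neg, Complex.ofReal_log (by positivity)]
    push_cast
    congr 1; ring
  have hz := zeta_eq_tsum_one_div_nat_add_one_cpow (s := s) (by rw [hs]; norm_num)
  simp_rw [hterm] at hz
  have hnorm : ∀ n : ℕ, ‖Complex.exp (-(s * (Real.log ((n:ℝ)+1) : ℂ)))‖ = ((n:ℝ)+1) ^ (-(3/2) : ℝ) := by
    intro n
    rw [Complex.norm_exp, Real.rpow_def_of_pos (by positivity)]
    congr 1
    simp [hs]
    ring
  have hsum : Summable (fun n : ℕ => ‖Complex.exp (-(s * (Real.log ((n:ℝ)+1) : ℂ)))‖) := by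
    simp_rw [hnorm]; exact summable_one
  rw [sq, hz, tsum_mul_tsum_of_summable_norm hsum hsum]
  congr 1
  funext p
  rw [← Complex.exp_add, pq, Real.log_mul (by positivity) (by positivity)]
  congr 1
  push_cast; ring

lemma dirichlet_side {l : ℂ} (hl : |l.im| < π/2) :
    HasSum (fun p : ℕ × ℕ => 2 * π * Complex.exp (-((pq p : ℂ) * Complex.exp l)))
      (∫ t : ℝ, Ef l ((3/2:ℝ) + t * Complex.I) * riemannZeta ((3/2:ℝ) + t * Complex.I) ^ 2) := by
  have hF : ∀ (p : ℕ × ℕ) (t : ℝ), Ef l ((3/2:ℝ) + t * Complex.I) * Complex.exp (-(((3/2:ℝ) + t * Complex.I) * (Real.log (pq p) : ℂ)))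
      = Complex.Gamma ((3/2:ℝ) + t * Complex.I) * Complex.exp (-(((3/2:ℝ) + t * Complex.I) * (l + (Real.log (pq p) : ℂ)))) := by
    intro p t
    rw [Ef, mul_assoc, ← Complex.exp_add]; congr 2; ring
  have hl' : ∀ p, |(l + (Real.log (pq p) : ℂ)).im| < π/2 := by intro p; simpa using hl
  have hmell := fun p => gamma_mellin_inv (c := 3/2) (by norm_num) (hl' p)
  have hnorm : ∀ (p : ℕ × ℕ) (t : ℝ), ‖Ef l ((3/2:ℝ) + t * Complex.I) * Complex.exp (-(((3/2:ℝ) + t * Complex.I) * (Real.log (pq p) : ℂ)))‖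
     = ‖Ef l ((3/2:ℝ) + t * Complex.I)‖ * (pq p) ^ (-(3/2) : ℝ) := by
    intro p t
    rw [norm_mul, norm_exp_line, Real.rpow_def_of_pos (pq_pos p)]
    simp only [Complex.ofReal_re, Complex.ofReal_im, mul_zero, Real.exp_zero, mul_one]
    congr 2; ring
  have key := hasSum_integral_of_summable_integral_norm (μ := volume)
    (F := fun (p : ℕ × ℕ) (t : ℝ) => Ef l ((3/2:ℝ) + t * Complex.I) * Complex.exp (-(((3/2:ℝ) + t * Complex.I) * (Real.log (pq p) : ℂ))))
    (fun p => by
      rw [show (fun t : ℝ => Ef l ((3/2:ℝ) + t * Complex.I) * Complex.exp (-(((3/2:ℝ) + t * Complex.I) * (Real.log (pq p) : ℂ)))) = _ from funext (hF p)]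
      exact (hmell p).1)
    (by
      simp_rw [hnorm, integral_mul_const]
      exact summable_pq.mul_left _)
  convert! key using 1
  · funext p
    simp_rw [hF p]
    rw [(hmell p).2, Complex.exp_add l, ← Complex.ofReal_exp, Real.exp_log (pq_pos p), mul_comm (Complex.exp l)]
  · congr 1
    funext t
    rw [tsum_mul_left, ← zeta_sq_tsum (by simp)]

end ZMS

namespace ZMS

lemma Z2_nonneg (t : ℝ) : 0 ≤ Z2 t := by unfold Z2; positivity

lemma half_ne_one (t : ℝ) : (1/2 + t * Complex.I : ℂ) ≠ 1 := by
  intro h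
  have := congrArg Complex.re h
  norm_num at this

lemma Z2_cont : Continuous Z2 := by
  unfold Z2
  refine (Continuous.norm ?_).pow 2
  rw [continuous_iff_continuousAt]
  intro t
  exact ContinuousAt.comp (f := fun t : ℝ => (1/2 + t * Complex.I : ℂ)) (differentiableAt_riemannZeta (half_ne_one t)).continuousAt (by fun_prop)

lemma Z2_le (t : ℝ) : Z2 t ≤ 49 * (1+|t|)^2 := by
  have h : ‖riemannZeta (1/2 + t * Complex.I)‖ ≤ 7 * (1+|t|) := by
    rw [riemannZeta_eq_inv_sub_add (half_ne_one t)]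
    refine (norm_add_le _ _).trans ?_
    have h1 := norm_zeta0_line (c := 1/2) (by norm_num) t
    have h2 := (norm_half_inv (-(1/2)) t (by norm_num [abs_of_pos])).2.1
    have e1 : (1/2 + t * Complex.I - 1 : ℂ) = ((-(1/2) : ℝ) : ℂ) + t * Complex.I := by push_cast; ring
    have e2 : (1/2 + t * Complex.I : ℂ) = ((1/2 : ℝ) : ℂ) + t * Complex.I := by push_cast; ring
    rw [e1, e2]
    have := abs_nonneg t
    linarith
  unfold Z2
  calc _ ≤ (7 * (1+|t|))^2 := by gcongr
    _ = _ := by ring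

lemma Z2_exp_int {b : ℝ} (hb : 0 < b) : Integrable (fun t : ℝ => Z2 t * Real.exp (-(b * |t|))) := by
  refine Integrable.mono' ((integrable_pow_exp_abs 2 hb).const_mul 49) ?_ (ae_of_all _ fun t => ?_)
  · exact (Z2_cont.mul (by fun_prop)).aestronglyMeasurable
  · rw [Real.norm_eq_abs, abs_of_nonneg (mul_nonneg (Z2_nonneg t) (Real.exp_pos _).le), ← mul_assoc]
    gcongr
    exact Z2_le t

/-- Laplace transform of `Z2` -/
noncomputable def Lz (δ : ℂ) : ℂ := ∫ t in Ioi (0:ℝ), (Z2 t : ℂ) * Complex.exp (-(δ * t))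

noncomputable def ll (δ : ℂ) : ℂ := (Real.log (2*π) : ℂ) + Complex.I * (π/2 - δ)

lemma ll_re (δ : ℂ) : (ll δ).re = Real.log (2*π) + δ.im := by
  unfold ll; simp

lemma ll_im (δ : ℂ) : (ll δ).im = π/2 - δ.re := by
  have : ((π:ℂ)/2).re = π/2 := by
    rw [show (π:ℂ)/2 = ((π/2 : ℝ) : ℂ) by push_cast; rfl]; simp
  unfold ll; simp [-Complex.ofReal_log, this]

lemma exp_ll (δ : ℂ) : Complex.exp (ll δ) = 2 * π * Complex.I * Complex.exp (-(Complex.I * δ)) := by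
  unfold ll
  rw [mul_sub, Complex.exp_add, sub_eq_add_neg, Complex.exp_add, ← Complex.ofReal_exp, Real.exp_log (by positivity),
    show Complex.I * (π/2 : ℂ) = (π:ℂ)/2 * Complex.I by ring, Complex.exp_pi_div_two_mul_I]
  push_cast; ring

lemma one_add_ne (t : ℝ) : (1 + Complex.I * Real.exp (-(π*t)) : ℂ) ≠ 0 := by
  intro h
  have := congrArg Complex.re h
  simp [-Complex.ofReal_exp] at this

lemma crit_eq (δ : ℂ) (t : ℝ) :
    Ef (ll δ) ((1/2:ℝ) + t * Complex.I) * riemannZeta ((1/2:ℝ) + t * Complex.I) ^ 2 =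
     Complex.exp (Complex.I * δ / 2) * ((Z2 t : ℂ) * Complex.exp (-(δ * t)) / (1 + Complex.I * Real.exp (-(π*t)))) := by
  rw [← mul_div_assoc, eq_div_iff (one_add_ne t)]
  have e2 : ((1/2 : ℝ) : ℂ) + t * Complex.I = (1/2 + t * Complex.I : ℂ) := by push_cast; ring
  rw [e2]
  set w : ℂ := 1/2 + t * Complex.I with hw
  have hfe := riemannZeta_one_sub (s := w) (fun n h => by
      have := congrArg Complex.re h
      simp [hw] at this
      have h2 : (0:ℝ) ≤ n := Nat.cast_nonneg n
      norm_num at this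
      linarith) (half_ne_one t)
  have hconj : riemannZeta (1 - w) = (starRingEnd ℂ) (riemannZeta w) := by
    rw [← riemannZeta_conj]
    congr 1
    apply Complex.ext <;> simp [hw]
    norm_num
  have hz : (Z2 t : ℂ) = riemannZeta w * riemannZeta (1 - w) := by
    rw [hconj, Complex.mul_conj, Complex.normSq_eq_norm_sq]
    rfl
  have h1 : (1 + Complex.I * Real.exp (-(π*t)) : ℂ) = Complex.exp (π * w / 2 * Complex.I) * (2 * Complex.cos (π * w / 2)) := by
    rw [Complex.two_cos, mul_add, ← Complex.exp_add, ← Complex.exp_add]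
    have a1 : π * w / 2 * Complex.I + π * w / 2 * Complex.I = (π:ℂ)/2 * Complex.I + ((-(π*t) : ℝ) : ℂ) := by
      rw [hw]; push_cast; linear_combination (π * t : ℂ) * Complex.I_mul_I
    have a2 : π * w / 2 * Complex.I + -(π * w / 2) * Complex.I = 0 := by ring
    rw [a1, a2, Complex.exp_add, Complex.exp_pi_div_two_mul_I, Complex.exp_zero, Complex.ofReal_exp]
    ring
  have h2 : (2*π : ℂ) ^ (-w) = Complex.exp (-(w * (Real.log (2*π) : ℂ))) := by
    have : (2*π : ℂ) ≠ 0 := by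
      have := Real.pi_pos.ne'
      exact_mod_cast (by positivity : (2*π:ℝ) ≠ 0)
    rw [Complex.cpow_def_of_ne_zero this, Complex.ofReal_log (by positivity)]
    push_cast; congr 1; ring
  have h3 : Complex.exp (-(w * ll δ)) * Complex.exp (π * w / 2 * Complex.I) = Complex.exp (Complex.I * δ / 2) * Complex.exp (-(δ*t)) * (2*π : ℂ) ^ (-w) := by
    rw [h2, ← Complex.exp_add, ← Complex.exp_add, ← Complex.exp_add]
    congr 1
    rw [ll, hw]
    linear_combination (δ * t : ℂ) * Complex.I_mul_I
  rw [h1, hz, hfe, Ef]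
  linear_combination (Complex.Gamma w * riemannZeta w ^ 2 * 2 * Complex.cos (π * w / 2)) * h3

lemma norm_expd (δ : ℂ) (t : ℝ) : ‖Complex.exp (-(δ * t))‖ = Real.exp (-(δ.re * t)) := by
  rw [Complex.norm_exp]; simp

lemma Lz_int {δ : ℂ} (hδ : 0 < δ.re) : IntegrableOn (fun t : ℝ => (Z2 t : ℂ) * Complex.exp (-(δ * t))) (Ioi 0) := by
  have h := (Z2_exp_int hδ).integrableOn (s := Ioi 0)
  refine Integrable.mono' h ?_ ?_
  · exact ((Complex.continuous_ofReal.comp Z2_cont).mul (by fun_prop)).aestronglyMeasurable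
  · filter_upwards [ae_restrict_mem measurableSet_Ioi] with t ht
    rw [norm_mul, norm_expd, Complex.norm_real, Real.norm_eq_abs, abs_of_nonneg (Z2_nonneg t), abs_of_pos ht]

noncomputable def Bz : ℝ := ∫ t : ℝ, Z2 t * Real.exp (-(1 * |t|))

lemma crit_side {δ : ℂ} (h0 : 0 < δ.re) (h1 : δ.re ≤ 1) :
    ‖Complex.exp (-(Complex.I * δ / 2)) * (∫ t : ℝ, Ef (ll δ) ((1/2:ℝ) + t * Complex.I) * riemannZeta ((1/2:ℝ) + t * Complex.I) ^ 2)
      - Lz δ‖ ≤ Bz := by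
  have hl : |(ll δ).im| < π/2 := by
    rw [ll_im, abs_lt]; constructor <;> linarith [Real.pi_gt_three]
  have hi := (zeta_line_int (c := 1/2) (e := -(1/2)) hl (by norm_num) (by norm_num) (by norm_num [abs_of_pos])).2.2.1
  have hi2 : Integrable (fun t : ℝ => (Z2 t : ℂ) * Complex.exp (-(δ * t)) / (1 + Complex.I * Real.exp (-(π*t)))) := by
    refine (hi.const_mul (Complex.exp (-(Complex.I * δ / 2)))).congr (ae_of_all _ fun t => ?_)
    simp only
    rw [crit_eq, ← mul_assoc, ← Complex.exp_add]
    simp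
  simp_rw [crit_eq]
  rw [integral_const_mul, ← mul_assoc, ← Complex.exp_add, neg_add_cancel, Complex.exp_zero, one_mul, Lz,
    ← integral_indicator measurableSet_Ioi, ← integral_sub hi2 ((integrable_indicator_iff measurableSet_Ioi).2 (Lz_int h0))]
  refine norm_integral_le_of_norm_le (Z2_exp_int one_pos) (ae_of_all _ fun t => ?_)
  set u := Real.exp (-(π*t)) with hu
  have hu0 : 0 < u := Real.exp_pos _
  have hn1 : 1 ≤ ‖(1 + Complex.I * u : ℂ)‖ := by
    have := Complex.abs_re_le_norm (1 + Complex.I * u : ℂ)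
    simpa using this
  have hn2 : u ≤ ‖(1 + Complex.I * u : ℂ)‖ := by
    have := Complex.abs_im_le_norm (1 + Complex.I * u : ℂ)
    simp only [Complex.add_im, Complex.one_im, Complex.I_mul_im, Complex.ofReal_re, zero_add] at this
    exact (le_abs_self u).trans this
  by_cases ht : t ∈ Ioi (0:ℝ)
  · rw [indicator_of_mem ht]
    have : (Z2 t : ℂ) * Complex.exp (-(δ * t)) / (1 + Complex.I * u) - (Z2 t : ℂ) * Complex.exp (-(δ * t))
       = (Z2 t : ℂ) * (Complex.exp (-(δ * t)) * (-(Complex.I * u) / (1 + Complex.I * u))) := by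
      have := one_add_ne t
      rw [← hu] at this
      field_simp
      ring
    rw [this, norm_mul, norm_mul, norm_expd, Complex.norm_real, Real.norm_eq_abs, abs_of_nonneg (Z2_nonneg t), norm_div, norm_neg, norm_mul,
      Complex.norm_I, one_mul, Complex.norm_real, Real.norm_eq_abs, abs_of_pos hu0, abs_of_pos ht]
    have ht' : 0 < t := ht
    have a1 : Real.exp (-(δ.re * t)) ≤ 1 := by rw [Real.exp_le_one_iff]; nlinarith
    have a2 : u / ‖(1 + Complex.I * u : ℂ)‖ ≤ Real.exp (-(1*t)) := by
      refine (div_le_self hu0.le hn1).trans ?_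
      rw [hu]; gcongr; linarith [Real.pi_gt_three]
    have := Z2_nonneg t
    calc _ ≤ Z2 t * (1 * Real.exp (-(1*t))) := by gcongr
      _ = _ := by ring
  · rw [indicator_of_notMem ht, sub_zero, norm_div, norm_mul, norm_expd, Complex.norm_real, Real.norm_eq_abs, abs_of_nonneg (Z2_nonneg t)]
    have ht' : t ≤ 0 := not_lt.1 ht
    rw [abs_of_nonpos ht', mul_div_assoc]
    refine mul_le_mul_of_nonneg_left ?_ (Z2_nonneg t)
    refine (div_le_div_of_nonneg_left (Real.exp_pos _).le hu0 hn2).trans ?_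
    rw [hu, ← Real.exp_sub]
    gcongr
    nlinarith [Real.pi_gt_three]

end ZMS

namespace ZMS

lemma exp_rpow_le {u : ℝ} (hu : 0 < u) : Real.exp (-u) ≤ 7 * u ^ (-(5/2) : ℝ) ∧ Real.exp (-u) ≤ 7 * u ^ (-(3/2) : ℝ) := by
  have gen : ∀ (a : ℝ) (n : ℕ), 0 ≤ a → a ≤ n → ((n.factorial : ℝ) ≤ 6) → Real.exp (-u) ≤ 7 * u ^ (-a) := by
    intro a n ha han hn
    have h1 : u ^ a ≤ 1 + u ^ n := by
      rcases le_total u 1 with h | h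
      · have := Real.rpow_le_one hu.le h ha
        have : 0 < u ^ n := by positivity
        linarith
      · have := Real.rpow_le_rpow_of_exponent_le h han
        rw [Real.rpow_natCast] at this
        linarith
    have h2 := Real.pow_div_factorial_le_exp u hu.le n
    rw [div_le_iff₀ (by positivity)] at h2
    have h3 := Real.one_le_exp hu.le
    have h4 : u ^ a ≤ 7 * Real.exp u := by
      have : Real.exp u * n.factorial ≤ Real.exp u * 6 := by gcongr
      linarith
    rw [Real.exp_neg, Real.rpow_neg hu.le, inv_eq_one_div, ← div_eq_mul_inv, div_le_div_iff₀ (Real.exp_pos _) (by positivity)]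
    linarith
  exact ⟨gen (5/2) 3 (by norm_num) (by norm_num) (by norm_num [Nat.factorial]), gen (3/2) 2 (by norm_num) (by norm_num) (by norm_num [Nat.factorial])⟩

noncomputable def Wp : ℝ := ∑' p : ℕ × ℕ, (pq p) ^ (-(3/2) : ℝ)

lemma Wp_nonneg : 0 ≤ Wp := tsum_nonneg fun p => Real.rpow_nonneg (pq_pos p).le _

lemma exp_pq_le (p : ℕ × ℕ) {σ : ℝ} (hσ : 0 < σ) : Real.exp (-(pq p * σ)) ≤ 7 * σ ^ (-(3/2) : ℝ) * (pq p) ^ (-(3/2) : ℝ) ∧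
    pq p * Real.exp (-(pq p * σ)) ≤ 7 * σ ^ (-(5/2) : ℝ) * (pq p) ^ (-(3/2) : ℝ) := by
  have hp := pq_pos p
  obtain ⟨h1, h2⟩ := exp_rpow_le (u := pq p * σ) (by positivity)
  rw [Real.mul_rpow hp.le hσ.le] at h1 h2
  refine ⟨by linarith, ?_⟩
  calc _ ≤ pq p * (7 * (pq p ^ (-(5/2) : ℝ) * σ ^ (-(5/2) : ℝ))) := by gcongr
    _ = 7 * σ ^ (-(5/2) : ℝ) * (pq p ^ (1:ℝ) * pq p ^ (-(5/2) : ℝ)) := by rw [Real.rpow_one]; ring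
    _ = _ := by rw [← Real.rpow_add hp]; norm_num

/-- divisor-type exponential sum -/
noncomputable def Sd (δ : ℂ) : ℂ := ∑' p : ℕ × ℕ, 2 * π * Complex.exp (-((pq p : ℂ) * (2 * π * δ)))

lemma term_bound {x : ℂ} {σ : ℝ} (hσ : 0 < σ) (hx : σ ≤ x.re) (p : ℕ × ℕ) :
    ‖2 * π * Complex.exp (-((pq p : ℂ) * x))‖ ≤ 2 * π * (7 * σ ^ (-(3/2) : ℝ) * (pq p) ^ (-(3/2) : ℝ)) := by
  rw [norm_mul, Complex.norm_exp]
  have : ‖(2 * π : ℂ)‖ = 2 * π := by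
    rw [norm_mul, Complex.norm_two, Complex.norm_real, Real.norm_eq_abs, abs_of_pos Real.pi_pos]
  rw [this]
  gcongr
  refine le_trans ?_ (exp_pq_le p hσ).1
  have hp := pq_pos p
  simp
  gcongr

lemma sum_bound {x : ℂ} {σ : ℝ} (hσ : 0 < σ) (hx : σ ≤ x.re) :
    Summable (fun p : ℕ × ℕ => 2 * π * Complex.exp (-((pq p : ℂ) * x))) ∧
    ‖∑' p : ℕ × ℕ, 2 * π * Complex.exp (-((pq p : ℂ) * x))‖ ≤ 2 * π * (7 * σ ^ (-(3/2) : ℝ) * Wp) := by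
  have hs : HasSum (fun p : ℕ × ℕ => 2 * π * (7 * σ ^ (-(3/2) : ℝ) * (pq p) ^ (-(3/2) : ℝ))) (2 * π * (7 * σ ^ (-(3/2) : ℝ) * Wp)) :=
    (summable_pq.hasSum.mul_left _).mul_left _
  exact ⟨Summable.of_norm_bounded hs.summable (term_bound hσ hx), tsum_of_norm_bounded hs (term_bound hσ hx)⟩

lemma exp_diff (p : ℕ × ℕ) {a b : ℂ} {σ : ℝ} (ha : σ ≤ a.re) (hb : σ ≤ b.re) :
    ‖Complex.exp (-((pq p : ℂ) * a)) - Complex.exp (-((pq p : ℂ) * b))‖ ≤ pq p * Real.exp (-(pq p * σ)) * ‖a - b‖ := by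
  have hp := pq_pos p
  refine Convex.norm_image_sub_le_of_norm_hasDerivWithin_le (𝕜 := ℂ) (s := {z : ℂ | σ ≤ z.re}) (f := fun z => Complex.exp (-((pq p : ℂ) * z)))
    (f' := fun z => Complex.exp (-((pq p : ℂ) * z)) * (-((pq p : ℂ) * 1))) ?_ ?_ (convex_halfSpace_re_ge σ) hb ha
  · intro z _
    exact ((((hasDerivAt_id z).const_mul (pq p : ℂ)).neg).cexp).hasDerivWithinAt
  · intro z hz
    have hz' : σ ≤ z.re := hz
    rw [norm_mul, Complex.norm_exp, mul_one, norm_neg, Complex.norm_real, Real.norm_eq_abs, abs_of_pos hp, mul_comm]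
    simp
    gcongr

lemma exp_shift (p : ℕ × ℕ) (x : ℂ) : Complex.exp (-((pq p : ℂ) * x)) = Complex.exp (-((pq p : ℂ) * (x - 2 * π * Complex.I))) := by
  have h : Complex.exp ((((p.1+1)*(p.2+1) : ℕ) : ℂ) * (2 * π * Complex.I)) = 1 := Complex.exp_nat_mul_two_pi_mul_I _
  have e : -((pq p : ℂ) * (x - 2 * π * Complex.I)) = -((pq p : ℂ) * x) + (((p.1+1)*(p.2+1) : ℕ) : ℂ) * (2 * π * Complex.I) := by
    unfold pq; push_cast; ring
  rw [e, Complex.exp_add, h, mul_one]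

lemma key_small : ∃ C : ℝ, 0 < C ∧ ∀ δ : ℂ, 0 < δ.re → ‖δ‖ ≤ 1 → ‖Lz δ - Sd δ‖ ≤ C * (‖δ‖^2 * δ.re ^ (-(5/2) : ℝ)) := by
  have hB : 0 ≤ Bz := integral_nonneg fun t => mul_nonneg (Z2_nonneg t) (Real.exp_pos _).le
  have hW := Wp_nonneg
  refine ⟨Bz + 400 + 2 * π * (7 * Wp) + 2*π*(2 * π * (7 * Wp)), by positivity, fun δ h0 hn => ?_⟩
  set σ := δ.re with hσ
  have hσ1 : σ ≤ 1 := (Complex.re_le_norm δ).trans hn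
  have hσn : σ ≤ ‖δ‖ := Complex.re_le_norm δ
  have him : |δ.im| ≤ 1 := (Complex.abs_im_le_norm δ).trans hn
  have hl : |(ll δ).im| < π/2 := by
    rw [ll_im, abs_lt]; constructor <;> linarith [Real.pi_gt_three]
  have hlog : 1 ≤ Real.log (2*π) := by
    rw [Real.le_log_iff_exp_le (by positivity)]
    linarith [Real.exp_one_lt_d9, Real.pi_gt_three]
  set x := Complex.exp (ll δ) with hx
  have hxre : σ ≤ x.re := by
    have e1 : x.re = 2 * π * (Real.exp δ.im * Real.sin σ) := by
      rw [hx, Complex.exp_re, ll_re, ll_im, Real.cos_pi_div_two_sub, Real.exp_add, Real.exp_log (by positivity)]; ring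
    rw [e1]
    have hs := Real.mul_le_sin (x := σ) h0.le (by linarith [Real.pi_gt_three])
    have he : 1 ≤ 4 * Real.exp δ.im := by
      have h3 : Real.exp (-1) ≤ Real.exp δ.im := Real.exp_le_exp.2 (abs_le.1 him).1
      have h4 : 1 ≤ 4 * Real.exp (-1) := by
        rw [Real.exp_neg]
        have := Real.exp_one_lt_d9
        rw [← div_eq_mul_inv, le_div_iff₀ (Real.exp_pos _)]; linarith
      linarith
    have h5 : 2 * π * (2/π * σ) = 4 * σ := by field_simp; norm_num
    calc σ ≤ 4 * Real.exp δ.im * σ := by nlinarith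
      _ = Real.exp δ.im * (2 * π * (2/π*σ)) := by rw [h5]; ring
      _ ≤ Real.exp δ.im * (2 * π * Real.sin σ) := by gcongr
      _ = _ := by ring
  have hxd : ‖(x - 2 * π * Complex.I) - 2 * π * δ‖ ≤ 2 * π * ‖δ‖^2 := by
    have e1 : (x - 2 * π * Complex.I) - 2 * π * δ = 2 * π * Complex.I * (Complex.exp (-(Complex.I * δ)) - 1 - (-(Complex.I * δ))) := by
      rw [hx, exp_ll]; linear_combination (-2 * π * δ) * Complex.I_mul_I
    have hIδ : ‖-(Complex.I * δ)‖ = ‖δ‖ := by simp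
    have := Complex.norm_exp_sub_one_sub_id_le (x := -(Complex.I * δ)) (by rw [hIδ]; exact hn)
    rw [hIδ] at this
    rw [e1, norm_mul, norm_mul, norm_mul, Complex.norm_two, Complex.norm_I, Complex.norm_real, Real.norm_eq_abs, abs_of_pos Real.pi_pos, mul_one]
    gcongr
  have hbre : σ ≤ (2 * π * δ : ℂ).re := by
    have : (2 * π * δ : ℂ).re = 2 * π * σ := by
      rw [show (2 * π * δ : ℂ) = ((2 * π : ℝ) : ℂ) * δ by push_cast; ring, Complex.re_ofReal_mul]
    rw [this]; nlinarith [Real.pi_gt_three]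
  have hare : σ ≤ (x - 2 * π * Complex.I).re := by
    have : (x - 2 * π * Complex.I).re = x.re := by simp
    rw [this]; exact hxre
  set E3 := ∫ t : ℝ, Ef (ll δ) ((3/2:ℝ) + t * Complex.I) * riemannZeta ((3/2:ℝ) + t * Complex.I) ^ 2
  set E1 := ∫ t : ℝ, Ef (ll δ) ((1/2:ℝ) + t * Complex.I) * riemannZeta ((1/2:ℝ) + t * Complex.I) ^ 2
  have hE3 : E3 = ∑' p : ℕ × ℕ, 2 * π * Complex.exp (-((pq p : ℂ) * x)) := (dirichlet_side hl).tsum_eq.symm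
  set D := ‖δ‖^2 * σ ^ (-(5/2) : ℝ) with hD
  have hpow1 : σ ^ (-(1/2) : ℝ) ≤ D := by
    have : σ ^ (-(1/2) : ℝ) = σ^2 * σ ^ (-(5/2) : ℝ) := by
      rw [← Real.rpow_natCast, ← Real.rpow_add h0]; norm_num
    rw [this, hD]; gcongr
  have hpow2 : ‖δ‖ * σ ^ (-(3/2) : ℝ) ≤ D := by
    have : σ ^ (-(3/2) : ℝ) = σ * σ ^ (-(5/2) : ℝ) := by
      nth_rw 2 [← Real.rpow_one σ]
      rw [← Real.rpow_add h0]; norm_num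
    rw [this, hD, sq, ← mul_assoc]; gcongr
  have hsq : (√σ)⁻¹ = σ ^ (-(1/2) : ℝ) := by rw [Real.sqrt_eq_rpow, ← Real.rpow_neg h0.le]
  have hD1 : 1 ≤ D := le_trans (Real.one_le_rpow_of_pos_of_le_one_of_nonpos h0 hσ1 (by norm_num)) hpow1
  set e := Complex.exp (-(Complex.I * δ / 2)) with he
  have hIδ2 : ‖-(Complex.I * δ / 2)‖ = ‖δ‖ / 2 := by simp
  have he1 : ‖e - 1‖ ≤ ‖δ‖ := by
    have := Complex.norm_exp_sub_one_le (x := -(Complex.I * δ / 2)) (by rw [hIδ2]; linarith)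
    rw [hIδ2] at this
    linarith
  have he2 : ‖e‖ ≤ 2 := by
    have := norm_add_le (e - 1) 1
    rw [sub_add_cancel, norm_one] at this
    linarith
  have c1 : ‖e * E1 - Lz δ‖ ≤ Bz * D := (crit_side h0 hσ1).trans (le_mul_of_one_le_right hB hD1)
  have c2 : ‖E3 - E1‖ ≤ 200 * D := by
    refine (shift_zeta (l := ll δ) (σ := σ) ?_ (ll_im δ) h0 hσ1).trans ?_
    · rw [ll_re]; linarith [(abs_le.1 him).1]
    · rw [hsq]; gcongr
  have c3 : ‖E3‖ ≤ 2 * π * (7 * σ ^ (-(3/2) : ℝ) * Wp) := by rw [hE3]; exact (sum_bound h0 hxre).2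
  have c4 : ‖E3 - Sd δ‖ ≤ 2 * π * (2 * π * ‖δ‖^2) * (7 * σ ^ (-(5/2) : ℝ) * Wp) := by
    rw [hE3, Sd, ← (sum_bound h0 hxre).1.tsum_sub (sum_bound h0 hbre).1]
    refine tsum_of_norm_bounded ((summable_pq.hasSum.mul_left _).mul_left _) fun p => ?_
    rw [← mul_sub, norm_mul, exp_shift p x]
    have : ‖(2 * π : ℂ)‖ = 2 * π := by
      rw [norm_mul, Complex.norm_two, Complex.norm_real, Real.norm_eq_abs, abs_of_pos Real.pi_pos]
    rw [this, mul_assoc (2 * π)]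
    gcongr
    refine (exp_diff p hare hbre).trans ?_
    rw [mul_comm]
    have h7 := (exp_pq_le p h0).2
    have h8 := pq_pos p
    gcongr
  have dec : Lz δ - Sd δ = -(e * E1 - Lz δ) + (-(e * (E3 - E1)) + ((e - 1) * E3 + (E3 - Sd δ))) := by ring
  rw [dec]
  refine (norm_add_le _ _).trans ?_
  refine (add_le_add_right (norm_add_le _ _) _).trans ?_
  refine (add_le_add_right (add_le_add_right (norm_add_le _ _) _) _).trans ?_
  rw [norm_neg, norm_neg, norm_mul, norm_mul]
  have d2 : ‖e‖ * ‖E3 - E1‖ ≤ 2 * (200 * D) := by gcongr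
  have d3 : ‖e - 1‖ * ‖E3‖ ≤ 2 * π * (7 * Wp) * D := by
    calc _ ≤ ‖δ‖ * (2 * π * (7 * σ ^ (-(3/2) : ℝ) * Wp)) := by gcongr
      _ = 2 * π * (7 * Wp) * (‖δ‖ * σ ^ (-(3/2) : ℝ)) := by ring
      _ ≤ _ := by gcongr
  have d4 : 2 * π * (2 * π * ‖δ‖^2) * (7 * σ ^ (-(5/2) : ℝ) * Wp) = 2*π*(2 * π * (7 * Wp)) * D := by rw [hD]; ring
  linarith

lemma Lz_norm_le {δ : ℂ} (hδ : 0 < δ.re) : ‖Lz δ‖ ≤ ‖Lz (δ.re : ℂ)‖ := by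
  have h1 : Lz (δ.re : ℂ) = ((∫ t in Ioi (0:ℝ), Z2 t * Real.exp (-(δ.re * t)) : ℝ) : ℂ) := by
    rw [Lz, ← integral_complex_ofReal]
    congr 1; funext t; push_cast; rfl
  have h2 : 0 ≤ ∫ t in Ioi (0:ℝ), Z2 t * Real.exp (-(δ.re * t)) := integral_nonneg fun t => mul_nonneg (Z2_nonneg t) (Real.exp_pos _).le
  rw [h1, Complex.norm_real, Real.norm_eq_abs, abs_of_nonneg h2, Lz]
  refine (norm_integral_le_integral_norm _).trans (le_of_eq ?_)
  congr 1; funext t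
  rw [norm_mul, norm_expd, Complex.norm_real, Real.norm_eq_abs, abs_of_nonneg (Z2_nonneg t)]

lemma Sd_norm_le {δ : ℂ} (hδ : 0 < δ.re) : ‖Sd δ‖ ≤ 2 * π * (7 * Wp) * δ.re ^ (-(3/2) : ℝ) := by
  have : (2 * π * δ : ℂ).re = 2 * π * δ.re := by
    rw [show (2 * π * δ : ℂ) = ((2 * π : ℝ) : ℂ) * δ by push_cast; ring, Complex.re_ofReal_mul]
  have := (sum_bound (x := 2 * π * δ) hδ (by rw [this]; nlinarith [Real.pi_gt_three])).2
  refine this.trans (le_of_eq (by ring))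

lemma key_est : ∃ C : ℝ, 0 < C ∧ ∀ δ : ℂ, 0 < δ.re → δ.re ≤ 1 → ‖Lz δ - Sd δ‖ ≤ C * (‖δ‖^2 * δ.re ^ (-(5/2) : ℝ)) := by
  obtain ⟨C, hC, h⟩ := key_small
  have hW := Wp_nonneg
  refine ⟨C + 2 * (2 * π * (7 * Wp)), by positivity, fun δ h0 h1 => ?_⟩
  rcases le_total ‖δ‖ 1 with hn | hn
  · refine (h δ h0 hn).trans ?_
    gcongr
    have : 0 ≤ 2 * (2 * π * (7 * Wp)) := by positivity
    linarith
  · have a1 := Lz_norm_le h0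
    have a2 := Sd_norm_le h0
    have a3 := Sd_norm_le (δ := (δ.re : ℂ)) (by simpa using h0)
    have hnr : ‖(δ.re : ℂ)‖ = δ.re := by rw [Complex.norm_real, Real.norm_eq_abs, abs_of_pos h0]
    have a4 := h (δ.re : ℂ) (by simpa using h0) (by rw [hnr]; exact h1)
    rw [hnr, Complex.ofReal_re] at a4
    rw [Complex.ofReal_re] at a3
    have a5 := norm_sub_norm_le (Lz (δ.re : ℂ)) (Sd (δ.re : ℂ))
    have b1 : δ.re^2 * δ.re ^ (-(5/2) : ℝ) ≤ ‖δ‖^2 * δ.re ^ (-(5/2) : ℝ) := by gcongr; exact Complex.re_le_norm δ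
    have b2 : δ.re ^ (-(3/2) : ℝ) ≤ ‖δ‖^2 * δ.re ^ (-(5/2) : ℝ) := by
      calc δ.re ^ (-(3/2) : ℝ) ≤ δ.re ^ (-(5/2) : ℝ) := Real.rpow_le_rpow_of_exponent_ge h0 h1 (by norm_num)
        _ ≤ _ := le_mul_of_one_le_left (by positivity) (one_le_pow₀ hn)
    have b3 := mul_le_mul_of_nonneg_left b1 hC.le
    have b4 := mul_le_mul_of_nonneg_left b2 (by positivity : 0 ≤ 2 * π * (7 * Wp))
    refine (norm_sub_le _ _).trans ?_
    linarith

end ZMS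

namespace ZMS

noncomputable def Iz (x : ℝ) : ℝ := ∫ t in (0:ℝ)..x, Z2 t

noncomputable def Nd (x : ℝ) : ℝ := ∑' p : ℕ × ℕ, if 2 * π * pq p ≤ x then 2 * π else 0

lemma Z2_ii (a b : ℝ) : IntervalIntegrable Z2 volume a b := Z2_cont.intervalIntegrable a b

lemma Iz_mono {a b : ℝ} (hab : a ≤ b) : Iz a ≤ Iz b := by
  have : Iz b - Iz a = ∫ t in a..b, Z2 t := by
    unfold Iz; exact intervalIntegral.integral_interval_sub_left (Z2_ii _ _) (Z2_ii _ _)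
  have h2 : 0 ≤ ∫ t in a..b, Z2 t := intervalIntegral.integral_nonneg hab fun t _ => Z2_nonneg t
  linarith

lemma Iz_nonneg {x : ℝ} (hx : 0 ≤ x) : 0 ≤ Iz x := by
  have := Iz_mono hx
  simpa [Iz] using this

lemma Iz_le {x : ℝ} (hx : 0 ≤ x) : Iz x ≤ 49 * (1+x)^3 := by
  have h := intervalIntegral.integral_mono_on (μ := volume) hx (Z2_ii 0 x) (intervalIntegrable_const (c := 49 * (1+x)^2)) (fun t ht => by
    refine (Z2_le t).trans ?_
    rw [abs_of_nonneg ht.1]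
    have := ht.2
    have := ht.1
    gcongr)
  rw [intervalIntegral.integral_const, smul_eq_mul, sub_zero] at h
  unfold Iz
  refine h.trans ?_
  have : 0 ≤ 49 * (1+x)^2 := by positivity
  nlinarith

lemma Nd_term_le {x : ℝ} (hx : 0 ≤ x) (p : ℕ × ℕ) : ‖(if 2 * π * pq p ≤ x then 2 * π else 0 : ℝ)‖ ≤ 2 * π * (1+x)^3 * (pq p) ^ (-(3/2) : ℝ) := by
  have hp := pq_pos p
  have hpi := Real.pi_gt_three
  split_ifs with h
  · rw [Real.norm_eq_abs, abs_of_pos (by positivity)]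
    have h1 : pq p ≤ 1 + x := by nlinarith
    have h2 : 1 ≤ (1+x)^3 * (pq p) ^ (-(3/2) : ℝ) := by
      have h3 : (pq p) ^ (3/2 : ℝ) ≤ (1+x)^3 := by
        calc (pq p) ^ (3/2 : ℝ) ≤ (pq p) ^ (3 : ℝ) := Real.rpow_le_rpow_of_exponent_le (one_le_pq p) (by norm_num)
          _ = (pq p)^3 := by exact_mod_cast Real.rpow_natCast (pq p) 3
          _ ≤ _ := by gcongr
      rw [Real.rpow_neg hp.le, ← div_eq_mul_inv, le_div_iff₀ (by positivity)]
      linarith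
    rw [mul_assoc]
    exact le_mul_of_one_le_right (by positivity) h2
  · rw [norm_zero]; positivity

lemma Nd_summable (x : ℝ) : Summable (fun p : ℕ × ℕ => (if 2 * π * pq p ≤ x then 2 * π else 0 : ℝ)) := by
  rcases le_total 0 x with hx | hx
  · exact Summable.of_norm_bounded (summable_pq.mul_left _) (Nd_term_le hx)
  · refine summable_zero.congr fun p => ?_
    have := pq_pos p
    rw [if_neg]
    have : 0 < 2 * π * pq p := by positivity
    linarith

lemma Nd_mono : Monotone Nd := by
  intro a b hab
  refine (Nd_summable a).tsum_le_tsum (fun p => ?_) (Nd_summable b)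
  have := Real.pi_pos
  split_ifs with h1 h2
  · exact le_rfl
  · exact absurd (h1.trans hab) h2
  · positivity
  · exact le_rfl

lemma Nd_nonneg (x : ℝ) : 0 ≤ Nd x := tsum_nonneg fun p => by
  have := Real.pi_pos
  split_ifs <;> positivity

lemma Nd_le {x : ℝ} (hx : 0 ≤ x) : Nd x ≤ 2 * π * Wp * (1+x)^3 := by
  have := tsum_of_norm_bounded (summable_pq.hasSum.mul_left _) (Nd_term_le hx)
  have h2 := (le_abs_self _).trans this
  refine h2.trans (le_of_eq ?_)
  rw [Wp]; ring

lemma mono_lap_int {G : ℝ → ℝ} (hm : Measurable G) {K : ℝ} (hG0 : ∀ x, 0 ≤ x → 0 ≤ G x) (hG : ∀ x, 0 ≤ x → G x ≤ K * (1+x)^3)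
    {δ : ℂ} (hδ : 0 < δ.re) : IntegrableOn (fun x : ℝ => (G x : ℂ) * Complex.exp (-(δ * x))) (Ioi 0) := by
  have h := ((integrable_pow_exp_abs 3 hδ).const_mul K).integrableOn (s := Ioi 0)
  refine Integrable.mono' h ?_ ?_
  · exact ((Complex.measurable_ofReal.comp hm).aestronglyMeasurable).mul (by fun_prop)
  · filter_upwards [ae_restrict_mem measurableSet_Ioi] with t ht
    have ht' : 0 < t := ht
    rw [norm_mul, norm_expd, Complex.norm_real, Real.norm_eq_abs, abs_of_nonneg (hG0 t ht'.le), abs_of_pos ht', ← mul_assoc]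
    gcongr
    exact hG t ht'.le

lemma Iz_cont : Continuous Iz := intervalIntegral.continuous_primitive (fun a b => Z2_ii a b) 0

lemma Iz_lap_int {δ : ℂ} (hδ : 0 < δ.re) : IntegrableOn (fun x : ℝ => (Iz x : ℂ) * Complex.exp (-(δ * x))) (Ioi 0) :=
  mono_lap_int Iz_cont.measurable (fun _ h => Iz_nonneg h) (fun _ h => Iz_le h) hδ

lemma Nd_lap_int {δ : ℂ} (hδ : 0 < δ.re) : IntegrableOn (fun x : ℝ => (Nd x : ℂ) * Complex.exp (-(δ * x))) (Ioi 0) :=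
  mono_lap_int Nd_mono.measurable (fun x _ => Nd_nonneg x) (fun _ h => Nd_le h) hδ

lemma Iz_lap {δ : ℂ} (hδ : 0 < δ.re) : δ * ∫ x in Ioi (0:ℝ), (Iz x : ℂ) * Complex.exp (-(δ * x)) = Lz δ := by
  have hd : ∀ x ∈ Ioi (0:ℝ), HasDerivAt (fun x : ℝ => (Iz x : ℂ) * Complex.exp (-(δ * x)))
      ((Z2 x : ℂ) * Complex.exp (-(δ * x)) - δ * ((Iz x : ℂ) * Complex.exp (-(δ * x)))) x := by
    intro x _
    have h1 : HasDerivAt Iz (Z2 x) x := intervalIntegral.integral_hasDerivAt_right (Z2_ii 0 x) (Z2_cont.stronglyMeasurableAtFilter _ _) Z2_cont.continuousAt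
    have h2 : HasDerivAt (fun x : ℝ => Complex.exp (-(δ * x))) (Complex.exp (-(δ * x)) * (-(δ * 1))) x :=
      ((((hasDerivAt_id x).ofReal_comp).const_mul δ).neg).cexp
    convert! h1.ofReal_comp.mul h2 using 1
    ring
  have hlim : Tendsto (fun x : ℝ => (Iz x : ℂ) * Complex.exp (-(δ * x))) atTop (nhds 0) := by
    obtain ⟨K, hK, hK2⟩ := pow_exp_le 3 hδ
    have h0 : Tendsto (fun x : ℝ => 49 * (K * Real.exp (-(δ.re/2 * x)))) atTop (nhds 0) := by
      have : Tendsto (fun R : ℝ => Real.exp (-(δ.re/2 * R))) atTop (nhds 0) :=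
        Real.tendsto_exp_neg_atTop_nhds_zero.comp (tendsto_id.const_mul_atTop (by positivity))
      simpa using (this.const_mul K).const_mul 49
    refine squeeze_zero_norm' ?_ h0
    filter_upwards [eventually_ge_atTop 0] with x hx
    rw [norm_mul, norm_expd, Complex.norm_real, Real.norm_eq_abs, abs_of_nonneg (Iz_nonneg hx)]
    have := hK2 x
    rw [abs_of_nonneg hx] at this
    calc _ ≤ 49 * (1+x)^3 * Real.exp (-(δ.re * x)) := by gcongr; exact Iz_le hx
      _ ≤ _ := by rw [mul_assoc]; gcongr
  have h := integral_Ioi_of_hasDerivAt_of_tendsto (a := (0:ℝ)) ?_ hd ((Lz_int hδ).sub ((Iz_lap_int hδ).const_mul δ)) hlim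
  · rw [integral_sub (Lz_int hδ) ((Iz_lap_int hδ).const_mul δ), integral_const_mul] at h
    simp [Iz] at h
    exact (sub_eq_zero.1 h).symm
  · exact (Complex.continuous_ofReal.comp Iz_cont).continuousWithinAt.mul (by fun_prop)

lemma Nd_lap {δ : ℂ} (hδ : 0 < δ.re) : δ * ∫ x in Ioi (0:ℝ), (Nd x : ℂ) * Complex.exp (-(δ * x)) = Sd δ := by
  have hδ0 : δ ≠ 0 := by intro h; rw [h] at hδ; simp at hδ
  have hre : (-δ).re < 0 := by simpa using hδ
  have hexp : ∀ a : ℝ, IntegrableOn (fun x : ℝ => Complex.exp (-(δ * x))) (Ioi a) := by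
    intro a
    simpa only [neg_mul] using integrableOn_exp_mul_complex_Ioi hre a
  set F : ℕ × ℕ → ℝ → ℂ := fun p => (Ici (2 * π * pq p)).indicator (fun x : ℝ => 2 * π * Complex.exp (-(δ * x))) with hF
  have hsub : ∀ p, 0 < 2 * π * pq p := fun p => by have := pq_pos p; positivity
  have hinter : ∀ p, Ioi (0:ℝ) ∩ Ici (2 * π * pq p) = Ici (2 * π * pq p) := fun p =>
    inter_eq_right.2 (Ici_subset_Ioi.2 (hsub p))
  have hFi : ∀ p, Integrable (F p) (volume.restrict (Ioi 0)) := by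
    intro p
    refine Integrable.indicator ?_ measurableSet_Ici
    exact (hexp 0).const_mul _
  have hval : ∀ p, ∫ x in Ioi (0:ℝ), F p x = 2 * π * Complex.exp (-((pq p : ℂ) * (2 * π * δ))) / δ := by
    intro p
    rw [hF]
    simp only
    rw [setIntegral_indicator measurableSet_Ici, hinter p, integral_Ici_eq_integral_Ioi,
      integral_const_mul]
    have := integral_exp_mul_complex_Ioi hre (2 * π * pq p)
    simp only [neg_mul] at this
    rw [this]
    push_cast
    rw [neg_div_neg_eq, show δ * (2 * π * (pq p : ℂ)) = (pq p : ℂ) * (2 * π * δ) by ring, mul_div_assoc]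
  have hnorm : ∀ p, ∫ x in Ioi (0:ℝ), ‖F p x‖ = ‖2 * π * Complex.exp (-((pq p : ℂ) * (2 * π * (δ.re : ℂ))))‖ / δ.re := by
    intro p
    have e1 : (fun x => ‖F p x‖) = (Ici (2 * π * pq p)).indicator (fun x : ℝ => 2 * π * Real.exp (-(δ.re * x))) := by
      funext x
      rw [hF]
      simp only
      rw [norm_indicator_eq_indicator_norm]
      congr 1
      funext x
      rw [norm_mul, norm_expd, norm_mul, Complex.norm_two, Complex.norm_real, Real.norm_eq_abs, abs_of_pos Real.pi_pos]
    rw [e1, setIntegral_indicator measurableSet_Ici, hinter p, integral_Ici_eq_integral_Ioi,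
      integral_const_mul]
    have := integral_exp_mul_Ioi (a := -δ.re) (by linarith) (2 * π * pq p)
    simp only [neg_mul] at this
    rw [this, norm_mul, norm_mul, Complex.norm_two, Complex.norm_real, Real.norm_eq_abs, abs_of_pos Real.pi_pos, Complex.norm_exp,
      neg_div_neg_eq, mul_div_assoc]
    congr 3
    rw [show (-((pq p : ℂ) * (2 * π * (δ.re : ℂ)))) = ((-(δ.re * (2 * π * pq p)) : ℝ) : ℂ) by push_cast; ring, Complex.ofReal_re]
  have hre2 : (2 * π * (δ.re : ℂ)).re = 2 * π * δ.re := by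
    rw [show (2 * π * (δ.re : ℂ)) = ((2 * π * δ.re : ℝ) : ℂ) by push_cast; ring, Complex.ofReal_re]
  have hsum : Summable (fun p => ∫ x in Ioi (0:ℝ), ‖F p x‖) := by
    simp_rw [hnorm]
    exact ((sum_bound (x := 2 * π * (δ.re : ℂ)) hδ (by rw [hre2]; nlinarith [Real.pi_gt_three])).1.norm).div_const _
  have key := (hasSum_integral_of_summable_integral_norm hFi hsum).tsum_eq
  simp_rw [hval] at key
  have hN : ∀ x, ∑' p, F p x = (Nd x : ℂ) * Complex.exp (-(δ * x)) := by
    intro x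
    rw [Nd, Complex.ofReal_tsum, ← tsum_mul_right]
    congr 1
    funext p
    rw [hF]
    simp only [indicator_apply, mem_Ici]
    split_ifs <;> simp
  simp_rw [hN] at key
  rw [← key, tsum_div_const, Sd]
  field_simp

lemma diff_lap : ∃ C : ℝ, 0 < C ∧ ∀ δ : ℂ, 0 < δ.re → δ.re ≤ 1 →
    ‖∫ x in Ioi (0:ℝ), ((Iz x - Nd x : ℝ) : ℂ) * Complex.exp (-(δ * x))‖ ≤ C * (‖δ‖ * δ.re ^ (-(5/2) : ℝ)) := by
  obtain ⟨C, hC, h⟩ := key_est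
  refine ⟨C, hC, fun δ h0 h1 => ?_⟩
  have hδ0 : 0 < ‖δ‖ := lt_of_lt_of_le h0 (Complex.re_le_norm δ)
  have e1 : ∀ x : ℝ, ((Iz x - Nd x : ℝ) : ℂ) * Complex.exp (-(δ * x)) = (Iz x : ℂ) * Complex.exp (-(δ * x)) - (Nd x : ℂ) * Complex.exp (-(δ * x)) := by
    intro x; push_cast; ring
  simp_rw [e1]
  rw [integral_sub (Iz_lap_int h0) (Nd_lap_int h0)]
  have := h δ h0 h1
  rw [← Iz_lap h0, ← Nd_lap h0, ← mul_sub, norm_mul] at this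
  refine le_of_mul_le_mul_left (this.trans (le_of_eq ?_)) hδ0
  ring

end ZMS

namespace ZMS

lemma exists_kernel : ∃ (k : ℝ → ℝ) (kh : ℝ → ℂ), (∀ x, 0 ≤ k x) ∧ (∀ x, x ∉ Ioo (0:ℝ) 1 → k x = 0) ∧ Continuous k ∧ Integrable k ∧ 0 < ∫ x, k x ∧
    Continuous kh ∧ Integrable kh ∧ Integrable (fun ξ => |ξ| * ‖kh ξ‖) ∧
    ∀ v : ℝ, (k v : ℂ) = ∫ ξ, kh ξ * Complex.exp (((2 * π * ξ * v : ℝ) : ℂ) * Complex.I) := by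
  let f : ContDiffBump (1/2:ℝ) := ⟨1/4, 1/2, by norm_num, by norm_num⟩
  have hsupp : HasCompactSupport (fun x => ((f x : ℝ) : ℂ)) := f.hasCompactSupport.comp_left (g := fun x : ℝ => (x : ℂ)) (by simp)
  have hsm : ContDiff ℝ (⊤ : ℕ∞) (fun x => ((f x : ℝ) : ℂ)) := Complex.ofRealCLM.contDiff.comp f.contDiff
  let g : SchwartzMap ℝ ℂ := hsupp.toSchwartzMap hsm
  have hg : ∀ x, g x = ((f x : ℝ) : ℂ) := fun x => rfl
  let h : SchwartzMap ℝ ℂ := FourierTransform.fourier g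
  refine ⟨f, h, fun x => f.nonneg, fun x hx => ?_, f.continuous, f.continuous.integrable_of_hasCompactSupport f.hasCompactSupport, f.integral_pos,
    h.continuous, h.integrable, ?_, fun v => ?_⟩
  · have : x ∉ Function.support f := by
      rw [f.support_eq]
      intro h
      apply hx
      rw [Metric.mem_ball, Real.dist_eq, abs_lt] at h
      constructor <;> [have := h.1; have := h.2] <;> norm_num [f] at this <;> linarith
    simpa using this
  · simpa using h.integrable_pow_mul volume 1
  · have e : (FourierTransformInv.fourierInv h : SchwartzMap ℝ ℂ) = g := FourierTransform.fourierInv_fourier_eq g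
    have e2 := DFunLike.congr_fun e v
    rw [SchwartzMap.fourierInv_coe, Real.fourierInv_eq'] at e2
    rw [← hg v, ← e2]
    congr 1
    funext ξ
    rw [smul_eq_mul, mul_comm]
    congr 3
    simp
    ring

lemma tauber_core {k : ℝ → ℝ} {kh : ℝ → ℂ} (hkhi : Integrable kh) (hkh1 : Integrable (fun ξ => |ξ| * ‖kh ξ‖))
    (hinv : ∀ v : ℝ, (k v : ℂ) = ∫ ξ, kh ξ * Complex.exp (((2 * π * ξ * v : ℝ) : ℂ) * Complex.I)) :
    ∃ C : ℝ, 0 < C ∧ ∀ T H : ℝ, 1 ≤ T → 0 < H → H ≤ T →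
      |∫ x in Ioi (0:ℝ), (Iz x - Nd x) * (Real.exp (-(T⁻¹ * x)) * k ((x - T)/H))| ≤ C * (T ^ (5/2 : ℝ) / H) := by
  obtain ⟨C, hC, hd⟩ := diff_lap
  have hInteg : Integrable (fun ξ => ‖kh ξ‖ + 2 * π * (|ξ| * ‖kh ξ‖)) := hkhi.norm.add (hkh1.const_mul _)
  have hJ : 0 ≤ ∫ ξ, (‖kh ξ‖ + 2 * π * (|ξ| * ‖kh ξ‖)) := integral_nonneg fun ξ => by positivity
  refine ⟨C * (∫ ξ, (‖kh ξ‖ + 2 * π * (|ξ| * ‖kh ξ‖))) + 1, by positivity, fun T H hT hH hHT => ?_⟩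
  have hT0 : 0 < T := by linarith
  have hTre : 0 < ((T⁻¹ : ℝ) : ℂ).re := by simpa using hT0
  have hA : IntegrableOn (fun x : ℝ => ((Iz x - Nd x : ℝ) : ℂ) * Complex.exp (-(((T⁻¹ : ℝ) : ℂ) * x))) (Ioi 0) := by
    refine ((Iz_lap_int hTre).sub (Nd_lap_int hTre)).congr (ae_of_all _ fun x => ?_)
    simp only [Pi.sub_apply]
    push_cast; ring
  have hprod := (hA.mul_prod hkhi).bdd_mul (c := 1) (f := fun z : ℝ × ℝ => Complex.exp (((2 * π * z.2 * ((z.1 - T)/H) : ℝ) : ℂ) * Complex.I))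
    (by fun_prop) (ae_of_all _ fun z => by rw [Complex.norm_exp_ofReal_mul_I])
  have hswap := integral_integral_swap (μ := volume.restrict (Ioi (0:ℝ))) (ν := volume)
    (f := fun x ξ : ℝ => Complex.exp (((2 * π * ξ * ((x - T)/H) : ℝ) : ℂ) * Complex.I) * ((((Iz x - Nd x : ℝ) : ℂ) * Complex.exp (-(((T⁻¹ : ℝ) : ℂ) * x))) * kh ξ)) hprod
  have hL : ((∫ x in Ioi (0:ℝ), (Iz x - Nd x) * (Real.exp (-(T⁻¹ * x)) * k ((x - T)/H)) : ℝ) : ℂ) =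
      ∫ x in Ioi (0:ℝ), ∫ ξ, Complex.exp (((2 * π * ξ * ((x - T)/H) : ℝ) : ℂ) * Complex.I) * ((((Iz x - Nd x : ℝ) : ℂ) * Complex.exp (-(((T⁻¹ : ℝ) : ℂ) * x))) * kh ξ) := by
    rw [← integral_complex_ofReal]
    congr 1
    funext x
    have : ∀ ξ : ℝ, Complex.exp (((2 * π * ξ * ((x - T)/H) : ℝ) : ℂ) * Complex.I) * ((((Iz x - Nd x : ℝ) : ℂ) * Complex.exp (-(((T⁻¹ : ℝ) : ℂ) * x))) * kh ξ)
      = (((Iz x - Nd x : ℝ) : ℂ) * Complex.exp (-(((T⁻¹ : ℝ) : ℂ) * x))) * (kh ξ * Complex.exp (((2 * π * ξ * ((x - T)/H) : ℝ) : ℂ) * Complex.I)) := by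
      intro ξ; ring
    simp_rw [this]
    rw [integral_const_mul, ← hinv]
    push_cast; ring
  rw [← Real.norm_eq_abs, ← Complex.norm_real, hL, hswap]
  have hb : ∀ ξ : ℝ, ‖∫ x in Ioi (0:ℝ), Complex.exp (((2 * π * ξ * ((x - T)/H) : ℝ) : ℂ) * Complex.I) * ((((Iz x - Nd x : ℝ) : ℂ) * Complex.exp (-(((T⁻¹ : ℝ) : ℂ) * x))) * kh ξ)‖
      ≤ C * (T ^ (5/2 : ℝ) / H) * (‖kh ξ‖ + 2 * π * (|ξ| * ‖kh ξ‖)) := by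
    intro ξ
    set δ : ℂ := ((T⁻¹ : ℝ) : ℂ) - ((2 * π * ξ / H : ℝ) : ℂ) * Complex.I with hδ
    have hre : δ.re = T⁻¹ := by rw [hδ]; simp [-Complex.ofReal_div, -Complex.ofReal_mul, -Complex.ofReal_inv]
    have hn : ‖δ‖ ≤ (1 + 2 * π * |ξ|) / H := by
      refine (norm_sub_le _ _).trans ?_
      rw [norm_mul, Complex.norm_I, mul_one, Complex.norm_real, Complex.norm_real, Real.norm_eq_abs, Real.norm_eq_abs, abs_of_pos (by positivity),
        abs_div, abs_mul, abs_of_pos hH, abs_of_pos (by positivity : 0 < 2 * π), add_div]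
      gcongr
      rw [one_div]; gcongr
    have e : ∀ x : ℝ, Complex.exp (((2 * π * ξ * ((x - T)/H) : ℝ) : ℂ) * Complex.I) * ((((Iz x - Nd x : ℝ) : ℂ) * Complex.exp (-(((T⁻¹ : ℝ) : ℂ) * x))) * kh ξ)
       = (((Iz x - Nd x : ℝ) : ℂ) * Complex.exp (-(δ * x))) * (kh ξ * Complex.exp (((-(2 * π * ξ * T/H) : ℝ) : ℂ) * Complex.I)) := by
      intro x
      have e3 : Complex.exp (-(δ * x)) * Complex.exp (((-(2 * π * ξ * T/H) : ℝ) : ℂ) * Complex.I) =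
        Complex.exp (((2 * π * ξ * ((x - T)/H) : ℝ) : ℂ) * Complex.I) * Complex.exp (-(((T⁻¹ : ℝ) : ℂ) * x)) := by
        rw [← Complex.exp_add, ← Complex.exp_add]
        congr 1
        rw [hδ]; push_cast; ring
      linear_combination (-(((Iz x - Nd x : ℝ) : ℂ) * kh ξ)) * e3
    simp_rw [e]
    rw [integral_mul_const, norm_mul, norm_mul, Complex.norm_exp_ofReal_mul_I, mul_one]
    have h1 := hd δ (by rw [hre]; positivity) (by rw [hre]; exact inv_le_one_of_one_le₀ hT)
    have h2 : δ.re ^ (-(5/2) : ℝ) = T ^ (5/2 : ℝ) := by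
      rw [hre, Real.inv_rpow hT0.le, Real.rpow_neg hT0.le, inv_inv]
    rw [h2] at h1
    calc _ ≤ (C * ((1 + 2 * π * |ξ|) / H * T ^ (5/2 : ℝ))) * ‖kh ξ‖ := by
          gcongr
          exact h1.trans (by gcongr)
      _ = _ := by ring
  refine (norm_integral_le_of_norm_le (hInteg.const_mul _) (ae_of_all _ hb)).trans ?_
  rw [integral_const_mul]
  have : 0 ≤ T ^ (5/2 : ℝ) / H := by positivity
  nlinarith

lemma tauber : ∃ C : ℝ, 0 < C ∧ ∀ T H : ℝ, 1 ≤ T → 0 < H → H ≤ T →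
    Iz T ≤ Nd (T + H) + C * (T ^ (5/2 : ℝ) / H^2) ∧ Nd T ≤ Iz (T + H) + C * (T ^ (5/2 : ℝ) / H^2) := by
  obtain ⟨k, kh, hk0, hks, hkc, hki, hkp, h1, h2, h3, h4⟩ := exists_kernel
  obtain ⟨C, hC, hb⟩ := tauber_core h2 h3 h4
  set κ := ∫ x, k x with hκ
  refine ⟨C * Real.exp 2 / κ, by positivity, fun T H hT hH hHT => ?_⟩
  have hT0 : 0 < T := by linarith
  have hB := hb T H hT hH hHT
  set w : ℝ → ℝ := fun x => Real.exp (-(T⁻¹ * x)) * k ((x - T)/H) with hw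
  have hw0 : ∀ x, 0 ≤ w x := fun x => mul_nonneg (Real.exp_pos _).le (hk0 _)
  have hsupp : ∀ x, x ∉ Ioo T (T+H) → w x = 0 := by
    intro x hx
    rw [hw]; simp only
    rw [hks, mul_zero]
    intro h
    apply hx
    have a1 := h.1
    have a2 := h.2
    rw [lt_div_iff₀ hH] at a1
    rw [div_lt_iff₀ hH] at a2
    constructor <;> linarith
  have hki2 : Integrable (fun x => k ((x - T)/H)) := (hki.comp_div hH.ne').comp_sub_right T
  have hkint : ∫ x, k ((x - T)/H) = H * κ := by
    rw [integral_sub_right_eq_self (fun x => k (x/H)), Measure.integral_comp_div, abs_of_pos hH, smul_eq_mul]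
  have hwc : Continuous w := by
    rw [hw]
    exact (by fun_prop : Continuous fun x : ℝ => Real.exp (-(T⁻¹ * x))).mul (hkc.comp (by fun_prop))
  have hcs : HasCompactSupport w := HasCompactSupport.intro (isCompact_Icc (a := T) (b := T+H)) (fun x hx => hsupp x fun h => hx (Ioo_subset_Icc_self h))
  have hwi : Integrable w := hwc.integrable_of_hasCompactSupport hcs
  have hwtot : Real.exp (-2) * (H * κ) ≤ ∫ x in Ioi (0:ℝ), w x := by
    have e1 : ∫ x in Ioi (0:ℝ), w x = ∫ x, w x := by
      refine setIntegral_eq_integral_of_forall_compl_eq_zero fun x hx => hsupp x fun h => hx ?_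
      exact hT0.trans h.1
    rw [e1, ← hkint, ← integral_const_mul]
    refine integral_mono (hki2.const_mul _) hwi fun x => ?_
    by_cases hx : x ∈ Ioo T (T+H)
    · rw [hw]; simp only
      have : T⁻¹ * x ≤ 2 := by
        rw [inv_mul_le_iff₀ hT0]; linarith [hx.2]
      have := hk0 ((x - T)/H)
      gcongr
    · have h5 := hsupp x hx
      rw [h5]
      rw [hw] at h5
      simp only at h5
      have := (mul_eq_zero.1 h5).resolve_left (Real.exp_pos _).ne'
      simp only
      rw [this, mul_zero]
  have hmeas : Measurable (fun x => Iz x - Nd x) := Iz_cont.measurable.sub Nd_mono.measurable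
  have hGw : IntegrableOn (fun x => (Iz x - Nd x) * w x) (Ioi 0) := by
    refine Integrable.mono' (hwi.norm.const_mul (|Iz (T+H)| + |Iz T| + |Nd (T+H)| + |Nd T|)).integrableOn
      (hmeas.aestronglyMeasurable.mul hwc.aestronglyMeasurable) (ae_of_all _ fun x => ?_)
    rw [norm_mul]
    by_cases hx : x ∈ Ioo T (T+H)
    · refine mul_le_mul_of_nonneg_right ?_ (norm_nonneg _)
      rw [Real.norm_eq_abs, abs_le]
      have b1 := Iz_mono hx.1.le
      have b2 := Iz_mono hx.2.le
      have b3 := Nd_mono hx.1.le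
      have b4 := Nd_mono hx.2.le
      have := neg_abs_le (Iz T)
      have := neg_abs_le (Nd T)
      have := le_abs_self (Iz (T+H))
      have := le_abs_self (Nd (T+H))
      have := abs_nonneg (Iz (T+H))
      have := abs_nonneg (Iz T)
      have := abs_nonneg (Nd T)
      have := abs_nonneg (Nd (T+H))
      constructor <;> linarith
    · rw [hsupp x hx]; simp
  have fin : ∀ d : ℝ, d * (∫ x in Ioi (0:ℝ), w x) ≤ C * (T ^ (5/2 : ℝ) / H) → d ≤ C * Real.exp 2 / κ * (T ^ (5/2 : ℝ) / H^2) := by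
    intro d hd
    rcases le_total d 0 with h | h
    · exact h.trans (by positivity)
    · have h6 : d * (Real.exp (-2) * (H * κ)) ≤ C * (T ^ (5/2 : ℝ) / H) := (mul_le_mul_of_nonneg_left hwtot h).trans hd
      have h7 : d = d * (Real.exp (-2) * (H * κ)) * (Real.exp 2 / (H * κ)) := by
        rw [Real.exp_neg]; field_simp
      rw [h7]
      refine (mul_le_mul_of_nonneg_right h6 (by positivity)).trans (le_of_eq ?_)
      field_simp
  have hBB := abs_le.1 hB
  constructor
  · have : Iz T - Nd (T+H) ≤ C * Real.exp 2 / κ * (T ^ (5/2 : ℝ) / H^2) := by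
      refine fin _ (le_trans ?_ hBB.2)
      rw [← integral_const_mul]
      refine setIntegral_mono (hwi.integrableOn.const_mul _) hGw fun x => ?_
      by_cases hx : x ∈ Ioo T (T+H)
      · refine mul_le_mul_of_nonneg_right ?_ (hw0 x)
        linarith [Iz_mono hx.1.le, Nd_mono hx.2.le]
      · have h8 : Real.exp (-(T⁻¹ * x)) * k ((x - T)/H) = 0 := hsupp x hx
        simp only [hsupp x hx, h8, mul_zero, le_refl]
    linarith
  · have : Nd T - Iz (T+H) ≤ C * Real.exp 2 / κ * (T ^ (5/2 : ℝ) / H^2) := by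
      refine fin _ (le_trans ?_ (neg_le.1 hBB.1))
      rw [← integral_const_mul, ← integral_neg]
      refine setIntegral_mono (hwi.integrableOn.const_mul _) hGw.neg fun x => ?_
      by_cases hx : x ∈ Ioo T (T+H)
      · simp only
        rw [← neg_mul]
        refine mul_le_mul_of_nonneg_right ?_ (hw0 x)
        linarith [Iz_mono hx.2.le, Nd_mono hx.1.le]
      · have := hsupp x hx
        rw [hw] at this
        simp only at this
        simp only [hw, this, mul_zero, neg_zero, le_refl]
    linarith

end ZMS

namespace ZMS

def DS (N : ℕ) : Finset (ℕ × ℕ) := (Finset.range N ×ˢ Finset.range N).filter fun p => (p.1+1)*(p.2+1) ≤ N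

lemma mem_DS {N : ℕ} {p : ℕ × ℕ} : p ∈ DS N ↔ (p.1+1)*(p.2+1) ≤ N := by
  simp only [DS, Finset.mem_filter, Finset.mem_product, Finset.mem_range]
  constructor
  · exact fun h => h.2
  · intro h
    refine ⟨⟨?_, ?_⟩, h⟩ <;> nlinarith

lemma card_half (N r : ℕ) (hr : r ≤ N) : ((DS N).filter fun p => p.1 < r).card = ∑ m ∈ Finset.range r, N / (m+1) := by
  have e : (DS N).filter (fun p => p.1 < r) = (Finset.range r ×ˢ Finset.range N).filter fun p => (p.1+1)*(p.2+1) ≤ N := by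
    ext p
    simp only [Finset.mem_filter, mem_DS, Finset.mem_product, Finset.mem_range]
    constructor
    · rintro ⟨h1, h2⟩
      refine ⟨⟨h2, ?_⟩, h1⟩
      nlinarith
    · rintro ⟨⟨h1, h2⟩, h3⟩
      exact ⟨h3, h1⟩
  rw [e, Finset.card_filter, Finset.sum_product]
  refine Finset.sum_congr rfl fun m _ => ?_
  rw [← Finset.card_filter]
  have : (Finset.range N).filter (fun n => (m+1)*(n+1) ≤ N) = Finset.range (N/(m+1)) := by
    ext n
    simp only [Finset.mem_filter, Finset.mem_range]
    have hd : n < N/(m+1) ↔ (n+1)*(m+1) ≤ N := by rw [← Nat.succ_le_iff, Nat.le_div_iff_mul_le (Nat.succ_pos m)]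
    rw [hd]
    constructor
    · rintro ⟨_, h⟩; rw [mul_comm]; exact h
    · intro h
      rw [mul_comm] at h
      refine ⟨?_, h⟩
      have : n + 1 ≤ (m+1)*(n+1) := Nat.le_mul_of_pos_left _ (Nat.succ_pos m)
      have h' : (m+1)*(n+1) ≤ N := h
      omega
  rw [this, Finset.card_range]

lemma card_half' (N r : ℕ) : ((DS N).filter fun p => p.2 < r).card = ((DS N).filter fun p => p.1 < r).card := by
  refine Finset.card_bij (fun p _ => p.swap) ?_ ?_ ?_
  · intro p hp
    simp only [Finset.mem_filter, mem_DS] at hp ⊢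
    exact ⟨by simpa [mul_comm] using hp.1, by simpa using hp.2⟩
  · intro p _ q _ h; exact Prod.swap_injective h
  · intro p hp
    refine ⟨p.swap, ?_, by simp⟩
    simp only [Finset.mem_filter, mem_DS] at hp ⊢
    exact ⟨by simpa [mul_comm] using hp.1, by simpa using hp.2⟩

lemma hyperbola (N : ℕ) : (DS N).card + N.sqrt^2 = 2 * ∑ m ∈ Finset.range N.sqrt, N / (m+1) := by
  set r := N.sqrt with hr
  have h1 : r * r ≤ N := Nat.sqrt_le N
  have h2 : N < (r+1)*(r+1) := Nat.lt_succ_sqrt N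
  have hu : DS N = ((DS N).filter fun p => p.1 < r) ∪ ((DS N).filter fun p => p.2 < r) := by
    ext p
    simp only [Finset.mem_union, Finset.mem_filter, ← and_or_left]
    constructor
    · intro h
      refine ⟨h, ?_⟩
      rw [mem_DS] at h
      by_contra! hc
      have := Nat.mul_le_mul (Nat.succ_le_succ hc.1) (Nat.succ_le_succ hc.2)
      have h' : (r+1)*(r+1) ≤ (p.1+1)*(p.2+1) := this
      omega
    · exact fun h => h.1
  have hi : ((DS N).filter fun p => p.1 < r) ∩ ((DS N).filter fun p => p.2 < r) = Finset.range r ×ˢ Finset.range r := by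
    ext p
    simp only [Finset.mem_inter, Finset.mem_filter, mem_DS, Finset.mem_product, Finset.mem_range]
    constructor
    · rintro ⟨⟨_, a⟩, _, b⟩; exact ⟨a, b⟩
    · rintro ⟨a, b⟩
      have : (p.1+1)*(p.2+1) ≤ N := le_trans (Nat.mul_le_mul a b) h1
      exact ⟨⟨this, a⟩, this, b⟩
  have hc := Finset.card_union_add_card_inter ((DS N).filter fun p => p.1 < r) ((DS N).filter fun p => p.2 < r)
  rw [← hu, hi, Finset.card_product, Finset.card_range, card_half', card_half N r (Nat.sqrt_le_self N)] at hc
  rw [sq, hc]; ring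

lemma hyper_real (N : ℕ) : ∃ E : ℝ, 0 ≤ E ∧ E ≤ N.sqrt ∧ ((DS N).card : ℝ) = 2 * (N * (harmonic N.sqrt : ℝ)) - 2 * E - (N.sqrt:ℝ)^2 := by
  refine ⟨∑ m ∈ Finset.range N.sqrt, ((N:ℝ) / ((m+1:ℕ):ℝ) - ((N/(m+1) : ℕ) : ℝ)), ?_, ?_, ?_⟩
  · exact Finset.sum_nonneg fun m _ => sub_nonneg.2 Nat.cast_div_le
  · calc _ ≤ ∑ m ∈ Finset.range N.sqrt, (1:ℝ) := by
          refine Finset.sum_le_sum fun m _ => ?_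
          have := Nat.lt_floor_add_one ((N:ℝ) / ((m+1:ℕ):ℝ))
          rw [Nat.floor_div_eq_div] at this
          linarith
      _ = _ := by simp
  · have h := hyperbola N
    have h' : ((DS N).card : ℝ) + (N.sqrt:ℝ)^2 = 2 * ∑ m ∈ Finset.range N.sqrt, ((N/(m+1) : ℕ) : ℝ) := by exact_mod_cast h
    have e : (N * (harmonic N.sqrt : ℝ) : ℝ) = ∑ m ∈ Finset.range N.sqrt, (N:ℝ) / ((m+1:ℕ):ℝ) := by
      rw [harmonic]
      push_cast
      rw [Finset.mul_sum]
      rfl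
    rw [Finset.sum_sub_distrib, e]
    linarith

lemma sqrt_tendsto : Tendsto Nat.sqrt atTop atTop := by
  refine tendsto_atTop_mono' (f₁ := fun n => Nat.sqrt n) atTop (Eventually.of_forall fun _ => le_rfl) ?_
  rw [tendsto_atTop]
  intro b
  filter_upwards [eventually_ge_atTop (b*b)] with n hn
  exact Nat.le_sqrt.2 hn

lemma DS_asymp : Tendsto (fun N : ℕ => ((DS N).card : ℝ) / N - Real.log N) atTop (nhds (2 * Real.eulerMascheroniConstant - 1)) := by
  have hr : Tendsto (fun N : ℕ => (N.sqrt : ℝ)) atTop atTop := tendsto_natCast_atTop_atTop.comp sqrt_tendsto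
  have t1 : Tendsto (fun N : ℕ => (harmonic N.sqrt : ℝ) - Real.log N.sqrt) atTop (nhds Real.eulerMascheroniConstant) :=
    Real.tendsto_harmonic_sub_log.comp sqrt_tendsto
  have hinv : Tendsto (fun N : ℕ => ((N.sqrt : ℝ))⁻¹) atTop (nhds 0) := tendsto_inv_atTop_zero.comp hr
  have tq : Tendsto (fun N : ℕ => (N.sqrt : ℝ) / N) atTop (nhds 0) := by
    refine squeeze_zero' (Eventually.of_forall fun N => by positivity) ?_ hinv
    filter_upwards [eventually_ge_atTop 1] with N hN
    have h1 : 1 ≤ N.sqrt := Nat.le_sqrt.2 hN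
    have h2 : (N.sqrt : ℝ) * N.sqrt ≤ N := by exact_mod_cast Nat.sqrt_le N
    have h3 : (1:ℝ) ≤ N.sqrt := by exact_mod_cast h1
    have h4 : (1:ℝ) ≤ N := by exact_mod_cast hN
    rw [inv_eq_one_div, div_le_div_iff₀ (by linarith) (by linarith)]
    linarith
  have tr : Tendsto (fun N : ℕ => (N.sqrt : ℝ)^2 / N) atTop (nhds 1) := by
    have : Tendsto (fun N : ℕ => 1 - 2 * ((N.sqrt : ℝ) / N)) atTop (nhds 1) := by simpa using tendsto_const_nhds.sub (tq.const_mul 2)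
    refine tendsto_of_tendsto_of_tendsto_of_le_of_le' this tendsto_const_nhds ?_ ?_
    · filter_upwards [eventually_ge_atTop 1] with N hN
      have h2 : (N:ℝ) ≤ N.sqrt * N.sqrt + N.sqrt + N.sqrt := by exact_mod_cast Nat.sqrt_le_add N
      have h4 : (0:ℝ) < N := by exact_mod_cast hN
      rw [← sub_nonneg]
      have : (N.sqrt : ℝ)^2 / N - (1 - 2 * ((N.sqrt : ℝ) / N)) = ((N.sqrt:ℝ)^2 - N + 2 * N.sqrt) / N := by field_simp; ring
      rw [this]
      apply div_nonneg _ h4.le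
      nlinarith
    · filter_upwards [eventually_ge_atTop 1] with N hN
      have h2 : (N.sqrt : ℝ) * N.sqrt ≤ N := by exact_mod_cast Nat.sqrt_le N
      have h4 : (0:ℝ) < N := by exact_mod_cast hN
      rw [div_le_one h4]; nlinarith
  have tl : Tendsto (fun N : ℕ => Real.log ((N.sqrt : ℝ)^2 / N)) atTop (nhds 0) := by
    have := (Real.continuousAt_log one_ne_zero).tendsto.comp tr
    simpa [Function.comp_def] using this
  choose E hE0 hE1 hE2 using hyper_real
  have tE : Tendsto (fun N : ℕ => E N / N) atTop (nhds 0) := by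
    refine squeeze_zero (fun N => div_nonneg (hE0 N) (Nat.cast_nonneg _)) (fun N => ?_) tq
    exact div_le_div_of_nonneg_right (hE1 N) (Nat.cast_nonneg _)
  have := (((t1.const_mul 2).add tl).sub (tE.const_mul 2)).sub tr
  simp only [add_zero, mul_zero, sub_zero] at this
  refine this.congr' ?_
  filter_upwards [eventually_ge_atTop 1] with N hN
  have h4 : (0:ℝ) < N := by exact_mod_cast hN
  have h3 : (0:ℝ) < N.sqrt := by exact_mod_cast Nat.le_sqrt.2 hN
  rw [hE2 N, Real.log_div (by positivity) (by positivity), Real.log_pow]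
  push_cast
  field_simp
  ring

lemma Nd_eq {x : ℝ} (hx : 0 ≤ x) : Nd x = 2 * π * (DS ⌊x / (2*π)⌋₊).card := by
  have hpi := Real.pi_pos
  have hiff : ∀ p : ℕ × ℕ, 2 * π * pq p ≤ x ↔ p ∈ DS ⌊x / (2*π)⌋₊ := by
    intro p
    rw [mem_DS, Nat.le_floor_iff (by positivity), le_div_iff₀ (by positivity), pq]
    push_cast
    rw [mul_comm]
  rw [Nd]
  simp_rw [hiff]
  rw [tsum_eq_sum (s := DS ⌊x / (2*π)⌋₊) (fun p hp => if_neg hp), Finset.sum_ite_mem, Finset.inter_self, Finset.sum_const, nsmul_eq_mul, mul_comm]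

noncomputable def bb : ℝ := 2 * Real.eulerMascheroniConstant - 1 - Real.log (2*π)

lemma log_div_tendsto : Tendsto (fun x : ℝ => Real.log x / x) atTop (nhds 0) := by
  simpa using Real.isLittleO_log_id_atTop.tendsto_div_nhds_zero

lemma Nd_asymp : Tendsto (fun x : ℝ => Nd x / x - Real.log x) atTop (nhds bb) := by
  have hX : Tendsto (fun x : ℝ => x / (2*π)) atTop atTop := tendsto_id.atTop_div_const (by positivity)
  have hN : Tendsto (fun x : ℝ => ⌊x / (2*π)⌋₊) atTop atTop := tendsto_nat_floor_atTop.comp hX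
  have t1 := DS_asymp.comp hN
  have t2 : Tendsto (fun x : ℝ => (⌊x / (2*π)⌋₊ : ℝ) / (x/(2*π))) atTop (nhds 1) := tendsto_nat_floor_div_atTop.comp hX
  have t3 : Tendsto (fun x : ℝ => Real.log ((⌊x / (2*π)⌋₊ : ℝ) / (x/(2*π)))) atTop (nhds 0) := by
    simpa [Function.comp_def] using (Real.continuousAt_log one_ne_zero).tendsto.comp t2
  have t4 : Tendsto (fun x : ℝ => Real.log (x/(2*π)) * ((⌊x / (2*π)⌋₊ : ℝ) / (x/(2*π)) - 1)) atTop (nhds 0) := by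
    refine squeeze_zero_norm' ?_ (log_div_tendsto.comp hX)
    filter_upwards [hX.eventually_ge_atTop 1] with x hx
    set X := x/(2*π)
    have hX0 : 0 < X := by linarith
    rw [norm_mul, Real.norm_eq_abs, Real.norm_eq_abs, abs_of_nonneg (Real.log_nonneg hx)]
    have a1 := Nat.floor_le hX0.le
    have a2 := Nat.lt_floor_add_one X
    have : |(⌊X⌋₊ : ℝ) / X - 1| ≤ X⁻¹ := by
      have e : (⌊X⌋₊ : ℝ) / X - 1 = ((⌊X⌋₊:ℝ) - X) / X := by field_simp
      rw [e, abs_div, abs_of_pos hX0, inv_eq_one_div]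
      gcongr
      rw [abs_le]; constructor <;> linarith
    have hl := Real.log_nonneg hx
    show Real.log X * _ ≤ Real.log X / X
    rw [div_eq_mul_inv]
    exact mul_le_mul_of_nonneg_left this hl
  have := (((t2.mul t1).add (t2.mul t3)).add t4).sub_const (Real.log (2*π))
  simp only [one_mul, mul_zero, add_zero] at this
  refine this.congr' ?_
  filter_upwards [hX.eventually_ge_atTop 1, eventually_gt_atTop 0] with x hx hx0
  have hN1 : (0:ℝ) < ⌊x / (2*π)⌋₊ := by exact_mod_cast Nat.floor_pos.2 hx
  have hpi := Real.pi_pos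
  simp only [Function.comp_apply]
  rw [Nd_eq hx0.le, Real.log_div hN1.ne' (by positivity), Real.log_div hx0.ne' (by positivity)]
  field_simp
  ring

lemma Nd_shift {g : ℝ → ℝ} (h0 : Tendsto g atTop (nhds 0)) (h1 : Tendsto (fun T => g T * Real.log T) atTop (nhds 0)) :
    Tendsto (fun T => Nd (T * (1 + g T)) / T - Real.log T) atTop (nhds bb) := by
  have hg : Tendsto (fun T => 1 + g T) atTop (nhds 1) := by simpa using h0.const_add 1
  have hX : Tendsto (fun T => T * (1 + g T)) atTop atTop := tendsto_id.atTop_mul_pos one_pos hg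
  have t1 := Nd_asymp.comp hX
  have t2 : Tendsto (fun T => Real.log (1 + g T)) atTop (nhds 0) := by
    simpa [Function.comp_def] using (Real.continuousAt_log one_ne_zero).tendsto.comp hg
  have := ((hg.mul t1).add (hg.mul t2)).add h1
  simp only [one_mul, mul_zero, add_zero] at this
  refine this.congr' ?_
  filter_upwards [hg.eventually (lt_mem_nhds (show (0:ℝ) < 1 by norm_num)), eventually_gt_atTop 0] with T hT hT0
  simp only [Function.comp_apply]
  rw [Real.log_mul hT0.ne' hT.ne']
  field_simp
  ring

lemma Iz_asymp : Tendsto (fun T : ℝ => Iz T / T - Real.log T) atTop (nhds bb) := by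
  obtain ⟨C, hC, h⟩ := tauber
  set g : ℝ → ℝ := fun T => T ^ (-(1/5) : ℝ) with hg
  have g0 : Tendsto g atTop (nhds 0) := tendsto_rpow_neg_atTop (by norm_num)
  have g1 : Tendsto (fun T => g T * Real.log T) atTop (nhds 0) := by
    have := (isLittleO_log_rpow_atTop (r := 1/5) (by norm_num)).tendsto_div_nhds_zero
    refine this.congr' ?_
    filter_upwards [eventually_gt_atTop 0] with T hT
    rw [hg]; simp only
    rw [Real.rpow_neg hT.le]; field_simp
  have hu := Nd_shift g0 g1
  have hl := Nd_shift (g := fun T => - g T) (by simpa using g0.neg) (by simpa using g1.neg)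
  have he : Tendsto (fun T : ℝ => C * T ^ (-(1/10) : ℝ)) atTop (nhds 0) := by
    simpa using (tendsto_rpow_neg_atTop (y := 1/10) (by norm_num)).const_mul C
  have hu' := hu.add he
  have hl' := hl.sub he
  rw [add_zero] at hu'
  rw [sub_zero] at hl'
  have herr : ∀ T : ℝ, 0 < T → C * (T ^ (5/2 : ℝ) / (T * g T)^2) = C * T ^ (-(1/10) : ℝ) * T := by
    intro T hT
    have e1 : (T * g T)^2 = T ^ (8/5 : ℝ) := by
      rw [hg]; simp only
      nth_rw 1 [← Real.rpow_one T]
      rw [← Real.rpow_add hT, ← Real.rpow_natCast, ← Real.rpow_mul hT.le]; norm_num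
    rw [e1, mul_assoc]
    nth_rw 4 [← Real.rpow_one T]
    rw [← Real.rpow_sub hT, ← Real.rpow_add hT]; norm_num
  refine tendsto_of_tendsto_of_tendsto_of_le_of_le' hl' hu' ?_ ?_
  · filter_upwards [eventually_ge_atTop 2, g0.eventually (gt_mem_nhds (show (0:ℝ) < 1/2 by norm_num))] with T hT hgT
    have hT0 : 0 < T := by linarith
    have hgp : 0 < g T := Real.rpow_pos_of_pos hT0 _
    have h2 := (h (T * (1 + -g T)) (T * g T) (by nlinarith) (by positivity) (by nlinarith)).2
    have h3 : (T * (1 + -g T)) ^ (5/2 : ℝ) ≤ T ^ (5/2 : ℝ) := by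
      apply Real.rpow_le_rpow (by nlinarith) (by nlinarith) (by norm_num)
    have h4 : C * ((T * (1 + -g T)) ^ (5/2 : ℝ) / (T * g T)^2) ≤ C * T ^ (-(1/10) : ℝ) * T := by
      rw [← herr T hT0]; gcongr
    have h5 : T * (1 + -g T) + T * g T = T := by ring
    rw [h5] at h2
    have h6 : Nd (T * (1 + -g T)) / T - C * T ^ (-(1/10) : ℝ) ≤ Iz T / T := by
      rw [le_div_iff₀ hT0, sub_mul, div_mul_cancel₀ _ hT0.ne']
      linarith
    linarith
  · filter_upwards [eventually_ge_atTop 2, g0.eventually (gt_mem_nhds (show (0:ℝ) < 1/2 by norm_num))] with T hT hgT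
    have hT0 : 0 < T := by linarith
    have hgp : 0 < g T := Real.rpow_pos_of_pos hT0 _
    have h2 := (h T (T * g T) (by linarith) (by positivity) (by nlinarith)).1
    rw [herr T hT0, show T + T * g T = T * (1 + g T) by ring] at h2
    have h6 : Iz T / T ≤ Nd (T * (1 + g T)) / T + C * T ^ (-(1/10) : ℝ) := by
      rw [div_le_iff₀ hT0, add_mul, div_mul_cancel₀ _ hT0.ne']
      linarith
    linarith

end ZMS

namespace ZMS

lemma Iz_bounds : ∃ K : ℝ, 0 ≤ K ∧ ∀ x : ℝ, 0 ≤ x →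
    |Iz x - x * Real.log x - bb * x| ≤ (1/20) * x + K := by
  have h1 := (Metric.tendsto_nhds.1 Iz_asymp) (1/20) (by norm_num)
  obtain ⟨X, hX⟩ := eventually_atTop.1 (h1.and (eventually_gt_atTop 0))
  have hc : Continuous fun x => Iz x - x * Real.log x - bb * x :=
    (Iz_cont.sub Real.continuous_mul_log).sub (continuous_const.mul continuous_id)
  obtain ⟨K, hK⟩ := isCompact_Icc.exists_bound_of_continuousOn (s := Icc (0:ℝ) X) hc.continuousOn
  refine ⟨|K|, abs_nonneg _, fun x hx => ?_⟩
  rcases le_total x X with h | h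
  · have := hK x ⟨hx, h⟩
    rw [Real.norm_eq_abs] at this
    have := le_abs_self K
    linarith
  · obtain ⟨h2, h3⟩ := hX x h
    rw [Real.dist_eq] at h2
    have e : Iz x - x * Real.log x - bb * x = (Iz x / x - Real.log x - bb) * x := by field_simp
    rw [e, abs_mul, abs_of_pos h3]
    have := abs_nonneg K
    nlinarith

noncomputable def Rz (T : ℝ) : ℝ := ∫ t in Ioi (0:ℝ), Z2 t * Real.exp (-(t/T))

lemma Rz_int {T : ℝ} (hT : 0 < T) : IntegrableOn (fun t => Z2 t * Real.exp (-(t/T))) (Ioi 0) := by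
  have := (Z2_exp_int (b := T⁻¹) (by positivity)).integrableOn (s := Ioi 0)
  refine this.congr_fun (fun t ht => ?_) measurableSet_Ioi
  simp only
  rw [abs_of_pos ht, div_eq_inv_mul]

lemma cexp_real (T t : ℝ) : Complex.exp (-(((T⁻¹ : ℝ) : ℂ) * t)) = ((Real.exp (-(t/T)) : ℝ) : ℂ) := by
  rw [Complex.ofReal_exp, div_eq_inv_mul]; push_cast; rfl

lemma Iz_int_real {T : ℝ} (hT : 0 < T) : IntegrableOn (fun x => Iz x * Real.exp (-(x/T))) (Ioi 0) := by
  have := Iz_lap_int (δ := ((T⁻¹ : ℝ) : ℂ)) (by simpa using hT)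
  have h2 := this.re
  refine h2.congr (Eventually.of_forall fun x => ?_)
  simp only
  rw [cexp_real, ← Complex.ofReal_mul]
  exact Complex.ofReal_re _

lemma Rz_eq {T : ℝ} (hT : 0 < T) : Rz T = ∫ u in Ioi (0:ℝ), Iz (T * u) * Real.exp (-u) := by
  have h := Iz_lap (δ := ((T⁻¹ : ℝ) : ℂ)) (by simpa using hT)
  rw [Lz] at h
  simp_rw [cexp_real, ← Complex.ofReal_mul] at h
  rw [integral_complex_ofReal, integral_complex_ofReal, ← Complex.ofReal_mul] at h
  have h' := Complex.ofReal_injective h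
  rw [Rz, ← h']
  have := integral_comp_mul_left_Ioi (fun x => Iz x * Real.exp (-(x/T))) 0 hT
  rw [mul_zero, smul_eq_mul] at this
  rw [← this]
  refine setIntegral_congr_fun measurableSet_Ioi fun u _ => ?_
  rw [mul_div_cancel_left₀ _ hT.ne']

lemma Iz_comp_int {T : ℝ} (hT : 0 < T) : IntegrableOn (fun u => Iz (T * u) * Real.exp (-u)) (Ioi 0) := by
  have := (integrableOn_Ioi_comp_mul_left_iff (fun x => Iz x * Real.exp (-(x/T))) 0 hT).2
    (by rw [mul_zero]; exact Iz_int_real hT)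
  refine this.congr_fun (fun u _ => ?_) measurableSet_Ioi
  simp only
  rw [mul_div_cancel_left₀ _ hT.ne']

lemma gint (s : ℝ) (hs : 0 ≤ s) : IntegrableOn (fun u : ℝ => u ^ s * Real.exp (-u)) (Ioi 0) ∧
    ∫ u in Ioi (0:ℝ), u ^ s * Real.exp (-u) = Real.Gamma (s+1) := by
  have h1 := Real.GammaIntegral_convergent (s := s+1) (by linarith)
  have h2 := Real.Gamma_eq_integral (s := s+1) (by linarith)
  have e : ∀ u : ℝ, Real.exp (-u) * u ^ (s + 1 - 1) = u ^ s * Real.exp (-u) := fun u => by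
    rw [add_sub_cancel_right, mul_comm]
  simp_rw [e] at h1 h2
  exact ⟨h1, h2.symm⟩

lemma comb_int (a b c d : ℝ) :
    IntegrableOn (fun u : ℝ => (a + b * u + c * u^2 + d * u ^ (1/2 : ℝ)) * Real.exp (-u)) (Ioi 0) ∧
    ∫ u in Ioi (0:ℝ), (a + b * u + c * u^2 + d * u ^ (1/2 : ℝ)) * Real.exp (-u) = a + b + 2 * c + d * (√π / 2) := by
  obtain ⟨i0, v0⟩ := gint 0 le_rfl
  obtain ⟨i1, v1⟩ := gint 1 (by norm_num)
  obtain ⟨i2, v2⟩ := gint 2 (by norm_num)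
  obtain ⟨i3, v3⟩ := gint (1/2) (by norm_num)
  have g0 : Real.Gamma (0+1) = 1 := by simp
  have g1 : Real.Gamma (1+1) = 1 := by norm_num [Real.Gamma_two]
  have g2 : Real.Gamma (2+1) = 2 := by
    rw [Real.Gamma_add_one (by norm_num)]; norm_num [Real.Gamma_two]
  have g3 : Real.Gamma (1/2+1) = √π / 2 := by
    rw [Real.Gamma_add_one (by norm_num), Real.Gamma_one_half_eq]; ring
  rw [g0] at v0
  rw [g1] at v1
  rw [g2] at v2
  rw [g3] at v3
  have e : (fun u : ℝ => (a + b * u + c * u^2 + d * u ^ (1/2 : ℝ)) * Real.exp (-u)) =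
      fun u => ((a * (u ^ (0:ℝ) * Real.exp (-u)) + b * (u ^ (1:ℝ) * Real.exp (-u)))
        + c * (u ^ (2:ℝ) * Real.exp (-u))) + d * (u ^ (1/2:ℝ) * Real.exp (-u)) := by
    funext u
    rw [Real.rpow_zero, Real.rpow_one, Real.rpow_two]
    ring
  rw [e]
  have j0 := i0.const_mul a
  have j1 := i1.const_mul b
  have j2 := i2.const_mul c
  have j3 := i3.const_mul d
  have j01 : Integrable (fun u : ℝ => a * (u ^ (0:ℝ) * Real.exp (-u)) + b * (u ^ (1:ℝ) * Real.exp (-u)))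
      (volume.restrict (Ioi 0)) := j0.add j1
  have j012 : Integrable (fun u : ℝ => (a * (u ^ (0:ℝ) * Real.exp (-u)) + b * (u ^ (1:ℝ) * Real.exp (-u)))
      + c * (u ^ (2:ℝ) * Real.exp (-u))) (volume.restrict (Ioi 0)) := j01.add j2
  refine ⟨j012.add j3, ?_⟩
  rw [integral_add j012 j3, integral_add j01 j2, integral_add j0 j1]
  simp_rw [integral_const_mul]
  rw [v0, v1, v2, v3]
  ring

lemma ulog_lower {u : ℝ} (hu : 0 < u) : 2 * u - 2 * u ^ (1/2:ℝ) ≤ u * Real.log u := by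
  rw [← Real.sqrt_eq_rpow]
  have hs : 0 < √u := Real.sqrt_pos.2 hu
  have h := Real.one_sub_inv_le_log_of_pos hs
  rw [Real.log_sqrt hu.le] at h
  have h2 : u * (√u)⁻¹ = √u := by
    rw [← div_eq_mul_inv, Real.div_sqrt]
  nlinarith

lemma ulog_upper {u : ℝ} (hu : 0 < u) : u * Real.log u ≤ u^2 - u := by
  have := Real.log_le_sub_one_of_pos hu
  nlinarith

lemma Rz_bounds : ∃ K : ℝ, 0 ≤ K ∧ (∀ x : ℝ, 0 ≤ x → |Iz x - x * Real.log x - bb * x| ≤ (1/20) * x + K) ∧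
    ∀ T : ℝ, 0 < T → T * Real.log T + (bb + 17/100) * T - K ≤ Rz T ∧
      Rz T ≤ T * Real.log T + (bb + 21/20) * T + K := by
  obtain ⟨K, hK0, hK⟩ := Iz_bounds
  refine ⟨K, hK0, hK, fun T hT => ?_⟩
  rw [Rz_eq hT]
  have hI := Iz_comp_int hT
  have hpi : √π ≤ 178/100 := by
    rw [Real.sqrt_le_left (by norm_num)]
    have := Real.pi_lt_d2
    linarith
  constructor
  · obtain ⟨i, v⟩ := comb_int (-K) (T * (Real.log T + 2 + (bb - 1/20))) 0 (-2 * T)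
    have := setIntegral_mono_on i hI measurableSet_Ioi (fun u hu => by
      have hu' : 0 < u := hu
      refine mul_le_mul_of_nonneg_right ?_ (Real.exp_pos _).le
      have h1 := (abs_le.1 (hK (T*u) (by positivity))).1
      rw [Real.log_mul hT.ne' hu'.ne'] at h1
      have h2 := mul_le_mul_of_nonneg_left (ulog_lower hu') hT.le
      linarith)
    rw [v] at this
    nlinarith
  · obtain ⟨i, v⟩ := comb_int K (T * (Real.log T - 1 + (bb + 1/20))) T 0
    have := setIntegral_mono_on hI i measurableSet_Ioi (fun u hu => by
      have hu' : 0 < u := hu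
      refine mul_le_mul_of_nonneg_right ?_ (Real.exp_pos _).le
      have h1 := (abs_le.1 (hK (T*u) (by positivity))).2
      rw [Real.log_mul hT.ne' hu'.ne'] at h1
      have h2 := mul_le_mul_of_nonneg_left (ulog_upper hu') hT.le
      linarith)
    rw [v] at this
    linarith

lemma trunc {y m : ℝ} (hy : 0 < y) (hm : 0 < m) :
    (∫ t in (0:ℝ)..m, Z2 t * Real.exp (-2 * t / y)) ≤ Rz (y/2) ∧
    Rz (y/2) - Real.exp (-(m/y)) * Rz y ≤ ∫ t in (0:ℝ)..m, Z2 t * Real.exp (-2 * t / y) := by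
  have e : ∀ t : ℝ, Z2 t * Real.exp (-2 * t / y) = Z2 t * Real.exp (-(t/(y/2))) := fun t => by
    congr 2; field_simp
  simp_rw [e]
  have hI := Rz_int (T := y/2) (by positivity)
  have hnn : ∀ (T t : ℝ), 0 ≤ Z2 t * Real.exp (-(t/T)) := fun T t => mul_nonneg (Z2_nonneg t) (Real.exp_pos _).le
  rw [intervalIntegral.integral_of_le hm.le]
  have hsplit : Rz (y/2) = (∫ t in Ioc 0 m, Z2 t * Real.exp (-(t/(y/2)))) + ∫ t in Ioi m, Z2 t * Real.exp (-(t/(y/2))) := by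
    rw [Rz, ← Ioc_union_Ioi_eq_Ioi hm.le]
    exact setIntegral_union (Ioc_disjoint_Ioi le_rfl) measurableSet_Ioi (hI.mono_set Ioc_subset_Ioi_self)
      (hI.mono_set (Ioi_subset_Ioi hm.le))
  have h0 : 0 ≤ ∫ t in Ioi m, Z2 t * Real.exp (-(t/(y/2))) := setIntegral_nonneg measurableSet_Ioi fun t _ => hnn _ t
  have hJ := Rz_int hy
  have h1 : (∫ t in Ioi m, Z2 t * Real.exp (-(t/(y/2)))) ≤ Real.exp (-(m/y)) * ∫ t in Ioi m, Z2 t * Real.exp (-(t/y)) := by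
    rw [← integral_const_mul]
    refine setIntegral_mono_on (hI.mono_set (Ioi_subset_Ioi hm.le))
      ((hJ.mono_set (Ioi_subset_Ioi hm.le)).const_mul _) measurableSet_Ioi fun t ht => ?_
    have ht' : m < t := ht
    have e2 : Real.exp (-(m/y)) * (Z2 t * Real.exp (-(t/y))) = Z2 t * Real.exp (-(m/y) + -(t/y)) := by
      rw [Real.exp_add]; ring
    rw [e2]
    refine mul_le_mul_of_nonneg_left (Real.exp_le_exp.2 ?_) (Z2_nonneg t)
    have : m / y ≤ t / y := by gcongr
    have e3 : t/(y/2) = t/y + t/y := by field_simp; ring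
    rw [e3]; linarith
  have h2 : (∫ t in Ioi m, Z2 t * Real.exp (-(t/y))) ≤ Rz y :=
    setIntegral_mono_set hJ (Eventually.of_forall fun t => hnn y t) (Ioi_subset_Ioi hm.le).eventuallyLE
  have h3 := mul_le_mul_of_nonneg_left h2 (Real.exp_pos (-(m/y))).le
  constructor <;> linarith

end ZMS

/-- For `μ` in the admissible class and `M = M_μ`, there exists `A > 1 − c` such that for all
sufficiently large `y`: `0 < M(y) − y/2 < (A/2) · y / ln(y/2)`, where `c` is the
Euler–Mascheroni constant. -/
theorem M_close_to_half (y₀ : ℝ) (μ M : ℝ → ℝ)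
    (hμC : ContDiffOn ℝ (⊤ : ℕ∞) μ (Set.Ici y₀))
    (hμmono : StrictMonoOn μ (Set.Ici y₀))
    (hμtop : Tendsto μ atTop atTop)
    (hμpos : ∀ y ∈ Set.Ici y₀, 0 < μ y)
    (hμgrow : ∀ y ∈ Set.Ici y₀, 7 * y * Real.log y ≤ μ y)
    (hMpos : ∀ y ∈ Set.Ici y₀, 0 < M y)
    (hM : ∀ y ∈ Set.Ici y₀,
      (∫ t in (0:ℝ)..μ y, Z2 t * Real.exp (-2 * t / y)) = ∫ t in (0:ℝ)..M y, Z2 t) :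
    ∃ A : ℝ, 1 - Real.eulerMascheroniConstant < A ∧
      ∀ᶠ y in atTop, 0 < M y - y/2 ∧ M y - y/2 < (A/2) * y / Real.log (y/2) := by
  obtain ⟨K, hK0, hK, hR⟩ := ZMS.Rz_bounds
  refine ⟨5, by linarith [Real.one_half_lt_eulerMascheroniConstant], ?_⟩
  have hlog : Tendsto (fun y : ℝ => Real.log (y/2)) atTop atTop :=
    Real.tendsto_log_atTop.comp (tendsto_id.atTop_div_const (by norm_num))
  filter_upwards [eventually_ge_atTop y₀, eventually_ge_atTop 2, eventually_ge_atTop (100 * (K + 1)),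
    eventually_ge_atTop (1 + |ZMS.bb + 21/20| + K), hlog.eventually_ge_atTop 1,
    hlog.eventually_ge_atTop (5 * |ZMS.bb - 1/20|)] with y hy0 hy2 hyK hyC hL1 hLb
  have hy : 0 < y := by linarith
  obtain ⟨tu, tl⟩ := ZMS.trunc hy (hμpos y hy0)
  rw [hM y hy0] at tu tl
  change ZMS.Iz (M y) ≤ _ at tu
  change _ ≤ ZMS.Iz (M y) at tl
  -- tail
  have htail : Real.exp (-(μ y / y)) * ZMS.Rz y ≤ 1 := by
    have hg := hμgrow y hy0
    have h1 : 7 * Real.log y ≤ μ y / y := by rw [le_div_iff₀ hy]; linarith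
    have h2 : Real.exp (-(μ y / y)) ≤ (y^7)⁻¹ := by
      rw [← Real.exp_log (show (0:ℝ) < y^7 by positivity), ← Real.exp_neg]
      apply Real.exp_le_exp.2
      rw [Real.log_pow]; push_cast; linarith
    have h3 := (hR y hy).2
    have h4 : Real.log y ≤ y := by linarith [Real.log_le_sub_one_of_pos hy]
    have h5 : ZMS.Rz y ≤ y^7 := by
      have a := le_abs_self (ZMS.bb + 21/20)
      have a0 := abs_nonneg (ZMS.bb + 21/20)
      have b1 : ZMS.Rz y ≤ y^2 + |ZMS.bb + 21/20| * y + K := by nlinarith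
      have b2 : |ZMS.bb + 21/20| * y ≤ |ZMS.bb + 21/20| * y^2 := by
        apply mul_le_mul_of_nonneg_left _ a0; nlinarith
      have b3 : K ≤ K * y^2 := by nlinarith [mul_nonneg hK0 (show (0:ℝ) ≤ y^2 - 1 by nlinarith)]
      have b4 : (1 + |ZMS.bb + 21/20| + K) * y^2 ≤ y * y^2 := mul_le_mul_of_nonneg_right hyC (by positivity)
      have b5 : y^3 ≤ y^7 := pow_le_pow_right₀ (by linarith) (by norm_num)
      nlinarith
    calc _ ≤ Real.exp (-(μ y / y)) * y^7 := mul_le_mul_of_nonneg_left h5 (Real.exp_pos _).le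
      _ ≤ (y^7)⁻¹ * y^7 := mul_le_mul_of_nonneg_right h2 (by positivity)
      _ = 1 := inv_mul_cancel₀ (by positivity)
  have hT : 0 < y/2 := by linarith
  obtain ⟨T, hTe⟩ : ∃ T, T = y/2 := ⟨_, rfl⟩
  have e5 : (5/2 : ℝ) * y / Real.log (y/2) = 5 * T / Real.log T := by rw [hTe]; ring
  rw [e5]
  rw [← hTe] at tu tl hT hL1 hLb ⊢
  have hTK : 50 * (K+1) ≤ T := by rw [hTe]; linarith
  obtain ⟨rl, ru⟩ := hR T hT
  constructor
  · by_contra hcon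
    have hle : M y ≤ T := by linarith
    have h1 := ZMS.Iz_mono hle
    have h2 := (abs_le.1 (hK T hT.le)).2
    linarith
  · by_contra hcon
    have hL0 : 0 < Real.log T := by linarith
    set x := T + 5 * T / Real.log T with hx
    have hle : x ≤ M y := by linarith
    have h1 := ZMS.Iz_mono hle
    have hq : 0 < 5 * T / Real.log T := by positivity
    have hTx : T ≤ x := by linarith
    have h2 := (abs_le.1 (hK x (by linarith))).1
    have h3 : x * Real.log T ≤ x * Real.log x :=
      mul_le_mul_of_nonneg_left (Real.log_le_log hT hTx) (by linarith)
    have h4 : x * Real.log T = T * Real.log T + 5 * T := by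
      rw [hx]; field_simp
    have h5 : -T ≤ (ZMS.bb - 1/20) * (5 * T / Real.log T) := by
      have a := neg_abs_le (ZMS.bb - 1/20)
      have : |ZMS.bb - 1/20| * (5 * T / Real.log T) ≤ T := by
        rw [← mul_div_assoc, div_le_iff₀ hL0]; nlinarith
      nlinarith
    have h6 : (ZMS.bb - 1/20) * x = (ZMS.bb - 1/20) * T + (ZMS.bb - 1/20) * (5 * T / Real.log T) := by rw [hx]; ring
    linarith
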